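/- Boundary weak Harnack inequality in half-balls. For every integer n ≥ 2, reals 0 < λ ≤ Λ, exponents q > n and p with n ≤ p ≤ q, d₀ ∈ (0,1/4], and K > 0, there exist constants ε > 0, c > 0, C > 0 such that the following holds. Let b, f : B₂⁺ → ℝ be continuous with b ≥ 0 and ‖b‖_{L^q(B₂⁺)} ≤ K, and let u be a C² function on B₂⁺ with u ≥ 0 and L⁻[u] ≤ f in B₂⁺. Then c·(∫_{B_{3/2}⁺} (u(x)/x_n)^ε dx)^{1/ε} ≤ inf_{x ∈ B₁⁺} u(x)/x_n + C·‖f⁺‖_{L^{p,q}(B₂⁺)}, the integral being a Lebesgue integral with values in [0,+∞] (in particular it is finite whenever the right-hand side is). -/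

import Mathlib

open MeasureTheory
open scoped ENNReal

/-- The Pucci minimal extremal operator `𝓜⁻(M)` with ellipticity constants `lam ≤ Lam`:
the infimum of `tr(A*M)` over symmetric matrices `A` with `lam•I ≤ A ≤ Lam•I`. -/
noncomputable def pucciMinus (n : ℕ) (lam Lam : ℝ) (M : Matrix (Fin n) (Fin n) ℝ) : ℝ :=
  sInf { t : ℝ | ∃ A : Matrix (Fin n) (Fin n) ℝ, A.IsSymm ∧
    (A - lam • (1 : Matrix (Fin n) (Fin n) ℝ)).PosSemidef ∧
    (Lam • (1 : Matrix (Fin n) (Fin n) ℝ) - A).PosSemidef ∧ t = (A * M).trace }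

/-- The Pucci maximal extremal operator `𝓜⁺(M)`. -/
noncomputable def pucciPlus (n : ℕ) (lam Lam : ℝ) (M : Matrix (Fin n) (Fin n) ℝ) : ℝ :=
  sSup { t : ℝ | ∃ A : Matrix (Fin n) (Fin n) ℝ, A.IsSymm ∧
    (A - lam • (1 : Matrix (Fin n) (Fin n) ℝ)).PosSemidef ∧
    (Lam • (1 : Matrix (Fin n) (Fin n) ℝ) - A).PosSemidef ∧ t = (A * M).trace }

/-- The Hessian matrix `D²u(x)` of `u` at `x`. -/
noncomputable def hess (n : ℕ) (u : EuclideanSpace ℝ (Fin n) → ℝ)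
    (x : EuclideanSpace ℝ (Fin n)) : Matrix (Fin n) (Fin n) ℝ :=
  fun i j => fderiv ℝ (fun y => fderiv ℝ u y (EuclideanSpace.single j (1 : ℝ))) x
    (EuclideanSpace.single i (1 : ℝ))

/-- The euclidean norm `|Du(x)|` of the gradient of `u` at `x`. -/
noncomputable def gradNorm (n : ℕ) (u : EuclideanSpace ℝ (Fin n) → ℝ)
    (x : EuclideanSpace ℝ (Fin n)) : ℝ := ‖fderiv ℝ u x‖

/-- The `L^p` norm `(∫_E |g|^p)^(1/p)`, as a Lebesgue integral valued in `[0,∞]`. -/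
noncomputable def LpNormE (n : ℕ) (p : ℝ) (g : EuclideanSpace ℝ (Fin n) → ℝ)
    (E : Set (EuclideanSpace ℝ (Fin n))) : ℝ≥0∞ :=
  (∫⁻ x in E, ENNReal.ofReal (|g x| ^ p)) ^ (1 / p)

/-- The last (`n`-th) coordinate `x_n` of a point of `ℝⁿ`. -/
def lastC (n : ℕ) (hn : 1 ≤ n) (x : EuclideanSpace ℝ (Fin n)) : ℝ := x ⟨n - 1, by omega⟩

/-- The open half-ball `B_R⁺ = {|x| < R, x_n > 0}`. -/
def halfBall (n : ℕ) (hn : 1 ≤ n) (R : ℝ) : Set (EuclideanSpace ℝ (Fin n)) :=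
  {x | ‖x‖ < R ∧ 0 < lastC n hn x}

/-- The flat boundary part `B_R⁰ = {|x| ≤ R, x_n = 0}`. -/
def flatB (n : ℕ) (hn : 1 ≤ n) (R : ℝ) : Set (EuclideanSpace ℝ (Fin n)) :=
  {x | ‖x‖ ≤ R ∧ lastC n hn x = 0}

/-- The norm `‖g‖_{L^{p,q}(B_R⁺)} = ‖g‖_{L^p(B_R⁺)} + ‖g‖_{L^q(B_R⁺ ∩ {x_n < d0})}`. -/
noncomputable def LpqNormHB (n : ℕ) (hn : 1 ≤ n) (p q d0 R : ℝ)
    (g : EuclideanSpace ℝ (Fin n) → ℝ) : ℝ≥0∞ :=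
  LpNormE n p g (halfBall n hn R) +
    LpNormE n q g {x ∈ halfBall n hn R | lastC n hn x < d0}

/-- The open cube `Q_ρ` of side `ρ` centered at `(0,…,0,ρ/2)`. -/
def cubeQ (n : ℕ) (hn : 1 ≤ n) (ρ : ℝ) : Set (EuclideanSpace ℝ (Fin n)) :=
  {x | (∀ i : Fin n, i.1 ≠ n - 1 → |x i| < ρ / 2) ∧ 0 < lastC n hn x ∧ lastC n hn x < ρ}

/-- The norm `‖g‖_{L^{p,q}(Q₂)} = ‖g‖_{L^p(Q₂)} + ‖g‖_{L^q(Q₂ ∩ {x_n < d0})}`. -/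
noncomputable def LpqNormQ (n : ℕ) (hn : 1 ≤ n) (p q d0 : ℝ)
    (g : EuclideanSpace ℝ (Fin n) → ℝ) : ℝ≥0∞ :=
  LpNormE n p g (cubeQ n hn 2) +
    LpNormE n q g {x ∈ cubeQ n hn 2 | lastC n hn x < d0}

section harnackProof

section part1

/-! ## Matrix algebra -/

/-- Admissible coefficient matrices. -/
def Adm (n : ℕ) (lam Lam : ℝ) (A : Matrix (Fin n) (Fin n) ℝ) : Prop :=
  A.IsSymm ∧ (A - lam • (1 : Matrix (Fin n) (Fin n) ℝ)).PosSemidef ∧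
    (Lam • (1 : Matrix (Fin n) (Fin n) ℝ) - A).PosSemidef

/-- `𝓜⁻(M) ≤ h` in a form convenient for proofs. -/
def QQ (n : ℕ) (lam Lam : ℝ) (M : Matrix (Fin n) (Fin n) ℝ) (h : ℝ) : Prop :=
  ∀ s : ℝ, (∀ A, Adm n lam Lam A → s ≤ (A * M).trace) → s ≤ h

lemma adm_lam {n : ℕ} {lam Lam : ℝ} (hLam : lam ≤ Lam) :
    Adm n lam Lam (lam • (1 : Matrix (Fin n) (Fin n) ℝ)) := by
  refine ⟨?_, ?_, ?_⟩
  · simp [Matrix.IsSymm]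
  · simpa using Matrix.PosSemidef.zero
  · rw [← sub_smul]
    exact Matrix.PosSemidef.one.smul (sub_nonneg.2 hLam)

lemma QQ_of_pucci {n : ℕ} {lam Lam : ℝ} (hLam : lam ≤ Lam) {M : Matrix (Fin n) (Fin n) ℝ}
    {h : ℝ} (hM : pucciMinus n lam Lam M ≤ h) : QQ n lam Lam M h := by
  intro s hs
  refine le_trans ?_ hM
  refine le_csInf ⟨_, lam • 1, (adm_lam hLam).1, (adm_lam hLam).2.1, (adm_lam hLam).2.2, rfl⟩ ?_
  rintro t ⟨A, h1, h2, h3, rfl⟩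
  exact hs A ⟨h1, h2, h3⟩

lemma QQ_mono {n : ℕ} {lam Lam : ℝ} {M : Matrix (Fin n) (Fin n) ℝ}
    {h h' : ℝ} (hM : QQ n lam Lam M h) (hh : h ≤ h') : QQ n lam Lam M h' :=
  fun s hs => (hM s hs).trans hh

lemma tr_mul_nonneg {n : ℕ} {P N : Matrix (Fin n) (Fin n) ℝ} (hP : P.PosSemidef)
    (hN : N.PosSemidef) : 0 ≤ (P * N).trace := by
  obtain ⟨B, rfl⟩ : ∃ B : Matrix (Fin n) (Fin n) ℝ, P = B.conjTranspose * B := by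
    open scoped MatrixOrder in
    exact CStarAlgebra.nonneg_iff_eq_star_mul_self.mp hP.nonneg
  rw [Matrix.mul_assoc, Matrix.trace_mul_comm]
  exact (hN.mul_mul_conjTranspose_same B).trace_nonneg

lemma adm_tr_lower {n : ℕ} {lam Lam : ℝ} {A N : Matrix (Fin n) (Fin n) ℝ}
    (hA : Adm n lam Lam A) (hN : N.PosSemidef) : lam * N.trace ≤ (A * N).trace := by
  have := tr_mul_nonneg hA.2.1 hN
  rw [Matrix.sub_mul, Matrix.trace_sub, Matrix.smul_mul, Matrix.one_mul, Matrix.trace_smul,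
    smul_eq_mul] at this
  linarith

lemma adm_tr_upper {n : ℕ} {lam Lam : ℝ} {A N : Matrix (Fin n) (Fin n) ℝ}
    (hA : Adm n lam Lam A) (hN : N.PosSemidef) : (A * N).trace ≤ Lam * N.trace := by
  have := tr_mul_nonneg hA.2.2 hN
  rw [Matrix.sub_mul, Matrix.trace_sub, Matrix.smul_mul, Matrix.one_mul, Matrix.trace_smul,
    smul_eq_mul] at this
  linarith

lemma adm_trace {n : ℕ} {lam Lam : ℝ} {A : Matrix (Fin n) (Fin n) ℝ}
    (hA : Adm n lam Lam A) : A.trace ≤ Lam * n := by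
  have := adm_tr_upper hA Matrix.PosSemidef.one
  simpa using this

lemma adm_vec {n : ℕ} {lam Lam : ℝ} {A : Matrix (Fin n) (Fin n) ℝ}
    (hA : Adm n lam Lam A) (v : Fin n → ℝ) :
    lam * (∑ i, v i ^ 2) ≤ (A * Matrix.vecMulVec v v).trace := by
  have h1 : (Matrix.vecMulVec v v).PosSemidef := by
    simpa using Matrix.posSemidef_vecMulVec_self_star v
  have := adm_tr_lower hA h1
  have h2 : (Matrix.vecMulVec v v).trace = ∑ i, v i ^ 2 := by
    simp [Matrix.trace, Matrix.vecMulVec_apply, sq]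
  rwa [h2] at this

/-- Hessians of barriers are subsolutions. -/
lemma barrier_adm {n : ℕ} {lam Lam : ℝ} {A : Matrix (Fin n) (Fin n) ℝ}
    (hA : Adm n lam Lam A) (α β γ : ℝ) (v e : Fin n → ℝ) (hα : α ≤ 0) (hβ : 0 ≤ β) (hγ : 0 ≤ γ)
    (h : 0 ≤ α * (Lam * n) + β * (lam * ∑ i, v i ^ 2) + γ * (lam * ∑ i, e i ^ 2)) :
    0 ≤ (A * (α • (1 : Matrix (Fin n) (Fin n) ℝ) + β • Matrix.vecMulVec v v
      + γ • Matrix.vecMulVec e e)).trace := by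
  have h1 := adm_trace hA
  have h2 := adm_vec hA v
  have h3 := adm_vec hA e
  simp only [Matrix.mul_add, Matrix.trace_add, Matrix.mul_smul, Matrix.trace_smul, smul_eq_mul,
    Matrix.mul_one]
  nlinarith [mul_le_mul_of_nonneg_left h2 hβ, mul_le_mul_of_nonneg_left h3 hγ,
    mul_le_mul_of_nonpos_left h1 hα]

lemma det_le_trace_pow {n : ℕ} {N : Matrix (Fin n) (Fin n) ℝ} (hN : N.PosSemidef) :
    |N.det| ≤ N.trace ^ n := by
  rw [abs_of_nonneg hN.det_nonneg, hN.1.det_eq_prod_eigenvalues, hN.1.trace_eq_sum_eigenvalues]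
  have h0 := hN.eigenvalues_nonneg
  simp only [RCLike.ofReal_real_eq_id, id]
  calc ∏ i, hN.1.eigenvalues i ≤ ∏ i : Fin n, ∑ j, hN.1.eigenvalues j :=
        Finset.prod_le_prod (fun i _ => h0 i)
          (fun i _ => Finset.single_le_sum (fun j _ => h0 j) (Finset.mem_univ i))
    _ = _ := by simp

/-- At a contact point the trace of the (shifted) Hessian is controlled. -/
lemma contact_trace {n : ℕ} {lam Lam : ℝ} (hlam : 0 < lam) {U P N : Matrix (Fin n) (Fin n) ℝ}
    {a h : ℝ} (ha : 0 ≤ a) (hN : N.PosSemidef)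
    (hU : U = N - a • (1 : Matrix (Fin n) (Fin n) ℝ) + P)
    (hP : ∀ A, Adm n lam Lam A → 0 ≤ (A * P).trace) (hQ : QQ n lam Lam U h) :
    N.trace ≤ (h + a * (Lam * n)) / lam := by
  rw [le_div_iff₀ hlam]
  have : lam * N.trace - a * (Lam * n) ≤ h := by
    apply hQ
    intro A hA
    have h1 := adm_tr_lower hA hN
    have h2 := adm_trace hA
    have h3 := hP A hA
    rw [hU]
    simp only [Matrix.mul_add, Matrix.mul_sub, Matrix.trace_sub, Matrix.trace_add, Matrix.mul_smul,
      Matrix.trace_smul, smul_eq_mul, Matrix.mul_one]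
    nlinarith [mul_le_mul_of_nonneg_left h2 ha]
  linarith

end part1

section part2

/-! ## Calculus -/

open Filter Topology Set

lemma eucl_sum {n : ℕ} (v : EuclideanSpace ℝ (Fin n)) :
    v = ∑ i, v i • EuclideanSpace.single i (1 : ℝ) := by
  have := (EuclideanSpace.basisFun (Fin n) ℝ).sum_repr v
  simpa using this.symm

lemma hess_apply {n : ℕ} {w : EuclideanSpace ℝ (Fin n) → ℝ} {x : EuclideanSpace ℝ (Fin n)}
    (hw : ContDiffAt ℝ 2 w x) (i j : Fin n) :
    hess n w x i j = fderiv ℝ (fderiv ℝ w) x (EuclideanSpace.single i 1)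
      (EuclideanSpace.single j 1) := by
  have h1 : DifferentiableAt ℝ (fderiv ℝ w) x :=
    (hw.fderiv_right (m := 1) (by norm_num)).differentiableAt (by norm_num)
  unfold hess
  rw [fderiv_clm_apply h1 (differentiableAt_const _)]
  simp

lemma hess_quad {n : ℕ} {w : EuclideanSpace ℝ (Fin n) → ℝ} {x : EuclideanSpace ℝ (Fin n)}
    (hw : ContDiffAt ℝ 2 w x) (v : EuclideanSpace ℝ (Fin n)) :
    fderiv ℝ (fderiv ℝ w) x v v = ∑ i, ∑ j, v i * v j * hess n w x i j := by
  conv_lhs => rw [eucl_sum v]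
  simp only [map_sum, map_smul, sum_apply, smul_apply,
    smul_eq_mul, hess_apply hw]
  rw [Finset.sum_comm]
  refine Finset.sum_congr rfl fun i _ => ?_
  try rw [Finset.mul_sum]
  refine Finset.sum_congr rfl fun j _ => ?_
  ring

lemma hess_symm {n : ℕ} {w : EuclideanSpace ℝ (Fin n) → ℝ} {x : EuclideanSpace ℝ (Fin n)}
    (hw : ContDiffAt ℝ 2 w x) (i j : Fin n) : hess n w x i j = hess n w x j i := by
  rw [hess_apply hw, hess_apply hw]
  exact hw.isSymmSndFDerivAt (by simp) _ _

lemma hess_sub {n : ℕ} {w φ : EuclideanSpace ℝ (Fin n) → ℝ} {x : EuclideanSpace ℝ (Fin n)}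
    (hw : ContDiffAt ℝ 2 w x) (hφ : ContDiffAt ℝ 2 φ x) :
    hess n (fun y => w y - φ y) x = hess n w x - hess n φ x := by
  ext i j
  have e : fderiv ℝ (fun y => w y - φ y) =ᶠ[𝓝 x] fun y => fderiv ℝ w y - fderiv ℝ φ y := by
    have h1 := hw.eventually (by simp)
    have h2 := hφ.eventually (by simp)
    filter_upwards [h1, h2] with y hy1 hy2
    exact fderiv_fun_sub (hy1.differentiableAt (by norm_num)) (hy2.differentiableAt (by norm_num))
  have h1 : DifferentiableAt ℝ (fderiv ℝ w) x :=
    (hw.fderiv_right (m := 1) (by norm_num)).differentiableAt (by norm_num)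
  have h2 : DifferentiableAt ℝ (fderiv ℝ φ) x :=
    (hφ.fderiv_right (m := 1) (by norm_num)).differentiableAt (by norm_num)
  rw [Matrix.sub_apply, hess_apply (hw.sub hφ), hess_apply hw, hess_apply hφ, e.fderiv_eq,
    fderiv_fun_sub h1 h2]
  simp

/-- one-dimensional second order necessary condition -/
lemma second_order_1d {g g' : ℝ → ℝ} {c : ℝ} (h1 : ∀ᶠ t in 𝓝 (0 : ℝ), HasDerivAt g (g' t) t)
    (h2 : HasDerivAt g' c 0) (hm : IsLocalMin g 0) : g' 0 = 0 ∧ 0 ≤ c := by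
  have h0 : g' 0 = 0 := hm.hasDerivAt_eq_zero h1.self_of_nhds
  refine ⟨h0, ?_⟩
  by_contra hc
  push Not at hc
  have ed : deriv g =ᶠ[𝓝 0] g' := by
    filter_upwards [h1] with t ht using ht.deriv
  have hdd : deriv (deriv g) 0 = c := by rw [ed.deriv_eq, h2.deriv]
  have hmax := isLocalMax_of_deriv_deriv_neg (f := g) (x₀ := 0) (by rw [hdd]; exact hc)
    (by rw [ed.self_of_nhds, h0]) h1.self_of_nhds.continuousAt
  have econst : g =ᶠ[𝓝 0] fun _ => g 0 := by
    filter_upwards [hm, hmax] with t ht1 ht2 using le_antisymm ht2 ht1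
  have e0 : deriv g =ᶠ[𝓝 0] fun _ => 0 := by
    filter_upwards [econst.eventuallyEq_nhds] with t ht
    rw [ht.deriv_eq]; simp
  rw [e0.deriv_eq] at hdd
  simp at hdd
  linarith

/-- gradient as a vector -/
noncomputable def gradV (n : ℕ) (w : EuclideanSpace ℝ (Fin n) → ℝ)
    (x : EuclideanSpace ℝ (Fin n)) : EuclideanSpace ℝ (Fin n) :=
  WithLp.toLp 2 (fun j => fderiv ℝ w x (EuclideanSpace.single j (1 : ℝ)))

lemma gradV_inner {n : ℕ} (w : EuclideanSpace ℝ (Fin n) → ℝ) (x v : EuclideanSpace ℝ (Fin n)) :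
    fderiv ℝ w x v = inner ℝ (gradV n w x) v := by
  conv_lhs => rw [eucl_sum v]
  simp [gradV, PiLp.inner_apply]

lemma gradV_norm {n : ℕ} (w : EuclideanSpace ℝ (Fin n) → ℝ) (x : EuclideanSpace ℝ (Fin n)) :
    ‖gradV n w x‖ = ‖fderiv ℝ w x‖ := by
  have : fderiv ℝ w x = innerSL ℝ (gradV n w x) := by
    ext v; simp [gradV_inner]
  rw [this, innerSL_apply_norm]

lemma contact_point {n : ℕ} {w : EuclideanSpace ℝ (Fin n) → ℝ} {x p : EuclideanSpace ℝ (Fin n)}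
    {a : ℝ} (hw : ContDiffAt ℝ 2 w x)
    (hm : IsLocalMin (fun y => w y + a / 2 * ‖y‖ ^ 2 - inner ℝ p y) x) :
    gradV n w x + a • x = p ∧
      (hess n w x + a • (1 : Matrix (Fin n) (Fin n) ℝ)).PosSemidef := by
  have key : ∀ v : EuclideanSpace ℝ (Fin n),
      fderiv ℝ w x v + (a * inner ℝ x v - inner ℝ p v) = 0 ∧
      0 ≤ fderiv ℝ (fderiv ℝ w) x v v + a * ‖v‖ ^ 2 := by
    intro v
    have hl : ∀ t : ℝ, HasDerivAt (fun t : ℝ => x + t • v) v t := by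
      intro t
      simpa using ((hasDerivAt_id t).smul_const v).const_add x
    have hcont : Tendsto (fun t : ℝ => x + t • v) (𝓝 0) (𝓝 x) := by
      have := (hl 0).continuousAt.tendsto
      simpa using this
    have h2w := hw.eventually (by simp)
    have h1 : DifferentiableAt ℝ (fderiv ℝ w) x :=
      (hw.fderiv_right (m := 1) (by norm_num)).differentiableAt (by norm_num)
    have hmin : IsLocalMin ((fun y => w y + a / 2 * ‖y‖ ^ 2 - inner ℝ p y) ∘
        (fun t : ℝ => x + t • v)) 0 := by
      have h4 := hcont.eventually hm
      filter_upwards [h4] with t ht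
      simpa using ht
    have := second_order_1d (g := fun t : ℝ => w (x + t • v) + a / 2 * ‖x + t • v‖ ^ 2
        - inner ℝ p (x + t • v))
      (g' := fun t : ℝ => fderiv ℝ w (x + t • v) v + a * inner ℝ (x + t • v) v - inner ℝ p v)
      (c := fderiv ℝ (fderiv ℝ w) x v v + a * ‖v‖ ^ 2) ?_ ?_ hmin
    · refine ⟨?_, this.2⟩
      have h3 := this.1
      simp at h3
      linarith
    · filter_upwards [hcont.eventually h2w] with t ht
      have d1 : HasDerivAt (fun t : ℝ => w (x + t • v)) (fderiv ℝ w (x + t • v) v) t :=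
        (ht.differentiableAt (by norm_num)).hasFDerivAt.comp_hasDerivAt t (hl t)
      have d2 : HasDerivAt (fun t : ℝ => a / 2 * ‖x + t • v‖ ^ 2)
          (a / 2 * (2 * inner ℝ (x + t • v) v)) t := (hl t).norm_sq.const_mul _
      have d3 : HasDerivAt (fun t : ℝ => inner ℝ p (x + t • v)) (inner ℝ p v) t := by
        have := (hasDerivAt_const t p).inner ℝ (hl t)
        simpa using this
      exact ((d1.add d2).sub d3).congr_deriv (by ring)
    · have d1 : HasDerivAt (fun t : ℝ => fderiv ℝ w (x + t • v) v)
          (fderiv ℝ (fderiv ℝ w) x v v) 0 := by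
        have h1' : HasFDerivAt (fderiv ℝ w) (fderiv ℝ (fderiv ℝ w) x) (x + (0 : ℝ) • v) := by
          simpa using h1.hasFDerivAt
        have := h1'.comp_hasDerivAt (0 : ℝ) (hl 0)
        exact ((ContinuousLinearMap.apply ℝ ℝ v).hasFDerivAt.comp_hasDerivAt (0 : ℝ) this)
      have d2 : HasDerivAt (fun t : ℝ => a * inner ℝ (x + t • v) v) (a * ‖v‖ ^ 2) 0 := by
        have := ((hl 0).inner ℝ (hasDerivAt_const (0 : ℝ) v)).const_mul a
        simpa using this
      exact (d1.add d2).sub_const _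
  constructor
  · refine ext_inner_right ℝ fun v => ?_
    have := (key v).1
    rw [gradV_inner] at this
    rw [inner_add_left, inner_smul_left]
    simp
    linarith
  · refine Matrix.PosSemidef.of_dotProduct_mulVec_nonneg ?_ ?_
    · ext i j
      simp [Matrix.one_apply, hess_symm hw i j, eq_comm]
    · intro v
      have := (key (WithLp.toLp 2 v)).2
      rw [hess_quad hw, EuclideanSpace.norm_sq_eq] at this
      refine this.trans (le_of_eq ?_)
      rw [Matrix.add_mulVec, dotProduct_add]
      congr 1
      · simp only [dotProduct, Matrix.mulVec, Finset.mul_sum]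
        refine Finset.sum_congr rfl fun i _ => Finset.sum_congr rfl fun j _ => ?_
        simp; ring
      · rw [Matrix.smul_mulVec, Matrix.one_mulVec]
        simp [dotProduct, Finset.mul_sum, sq]
        refine Finset.sum_congr rfl fun i _ => ?_
        ring

end part2

section part3

open MeasureTheory Filter Topology Set
open scoped ENNReal

/-! ## Area estimate -/

lemma isClosed_psd (n : ℕ) : IsClosed {M : Matrix (Fin n) (Fin n) ℝ | M.PosSemidef} := by
  have : {M : Matrix (Fin n) (Fin n) ℝ | M.PosSemidef} =
      {M | M.conjTranspose = M} ∩ ⋂ v : Fin n → ℝ, {M | 0 ≤ star v ⬝ᵥ (M.mulVec v)} := by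
    ext M
    simp only [Matrix.posSemidef_iff_dotProduct_mulVec, Matrix.IsHermitian, mem_ofPred_eq, mem_inter_iff,
      mem_iInter]
  rw [this]
  refine IsClosed.inter (isClosed_eq ?_ continuous_id) (isClosed_iInter fun v => ?_)
  · exact continuous_id.matrix_conjTranspose
  · exact isClosed_le continuous_const
      (continuous_const.dotProduct (continuous_id.matrix_mulVec continuous_const))

lemma hess_continuousOn {n : ℕ} {D : Set (EuclideanSpace ℝ (Fin n))} (hD : IsOpen D)
    {w : EuclideanSpace ℝ (Fin n) → ℝ} (hw : ContDiffOn ℝ 2 w D) :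
    ContinuousOn (hess n w) D := by
  have h1 : ContDiffOn ℝ 1 (fderiv ℝ w) D := hw.fderiv_of_isOpen hD (by norm_num)
  have h2 : ContDiffOn ℝ 0 (fderiv ℝ (fderiv ℝ w)) D := h1.fderiv_of_isOpen hD (by norm_num)
  have h3 := h2.continuousOn
  refine continuousOn_pi.2 fun i => continuousOn_pi.2 fun j => ?_
  have : ContinuousOn (fun x => fderiv ℝ (fderiv ℝ w) x (EuclideanSpace.single i 1)
      (EuclideanSpace.single j 1)) D :=
    (h3.clm_apply continuousOn_const).clm_apply continuousOn_const
  refine this.congr fun x hx => ?_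
  exact hess_apply (hw.contDiffAt (hD.mem_nhds hx)) i j

lemma gradV_hasFDerivAt {n : ℕ} {w : EuclideanSpace ℝ (Fin n) → ℝ}
    {x : EuclideanSpace ℝ (Fin n)} (hw : ContDiffAt ℝ 2 w x) (a : ℝ) :
    HasFDerivAt (fun y => gradV n w y + a • y)
      (Matrix.toEuclideanCLM (𝕜 := ℝ) (hess n w x + a • (1 : Matrix (Fin n) (Fin n) ℝ))) x := by
  rw [← hasFDerivWithinAt_univ, hasFDerivWithinAt_euclidean]
  intro j
  rw [hasFDerivWithinAt_univ]
  have h1 : DifferentiableAt ℝ (fderiv ℝ w) x :=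
    (hw.fderiv_right (m := 1) (by norm_num)).differentiableAt (by norm_num)
  have d1 : HasFDerivAt (fun y => fderiv ℝ w y (EuclideanSpace.single j (1 : ℝ)))
      ((ContinuousLinearMap.apply ℝ ℝ (EuclideanSpace.single j (1 : ℝ))).comp
        (fderiv ℝ (fderiv ℝ w) x)) x :=
    (ContinuousLinearMap.apply ℝ ℝ (EuclideanSpace.single j (1 : ℝ))).hasFDerivAt.comp x
      h1.hasFDerivAt
  have d2 : HasFDerivAt (fun y : EuclideanSpace ℝ (Fin n) => a * y j)
      (a • (PiLp.proj 2 (fun _ : Fin n => ℝ) j : EuclideanSpace ℝ (Fin n) →L[ℝ] ℝ)) x := by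
    exact ((PiLp.proj 2 (fun _ : Fin n => ℝ) j :
      EuclideanSpace ℝ (Fin n) →L[ℝ] ℝ).hasFDerivAt).const_mul a
  refine ((d1.add d2).congr_fderiv ?_)
  ext v
  have e1 : fderiv ℝ (fderiv ℝ w) x v (EuclideanSpace.single j (1 : ℝ))
      = ∑ i, hess n w x j i * v i := by
    conv_lhs => rw [eucl_sum v]
    simp only [map_sum, map_smul, sum_apply, smul_apply, smul_eq_mul]
    refine Finset.sum_congr rfl fun i _ => ?_
    rw [hess_symm hw j i, hess_apply hw, mul_comm]
  simp only [add_apply, ContinuousLinearMap.comp_apply, ContinuousLinearMap.apply_apply, e1,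
    smul_apply, PiLp.proj_apply, smul_eq_mul]
  rw [Matrix.ofLp_toEuclideanCLM, Matrix.add_mulVec, Matrix.smul_mulVec, Matrix.one_mulVec]
  simp [Matrix.mulVec, dotProduct]

lemma det_toEuclideanCLM {n : ℕ} (M : Matrix (Fin n) (Fin n) ℝ) :
    (Matrix.toEuclideanCLM (𝕜 := ℝ) M).det = M.det := by
  rw [ContinuousLinearMap.det, Matrix.coe_toEuclideanCLM_eq_toEuclideanLin]
  exact LinearMap.det_toLin (PiLp.basisFun 2 ℝ (Fin n)) M

lemma area_contact {n : ℕ} {D : Set (EuclideanSpace ℝ (Fin n))} (hD : IsOpen D)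
    {w : EuclideanSpace ℝ (Fin n) → ℝ} (hw : ContDiffOn ℝ 2 w D) (a : ℝ)
    {G : EuclideanSpace ℝ (Fin n) → ℝ} (hG : ContinuousOn G D)
    {S V : Set (EuclideanSpace ℝ (Fin n))} (hS : MeasurableSet S) (hSD : S ⊆ D)
    (hV : ∀ p ∈ V, ∃ x ∈ S, gradV n w x + a • x = p ∧
      (hess n w x + a • (1 : Matrix (Fin n) (Fin n) ℝ)).PosSemidef ∧
      (hess n w x + a • (1 : Matrix (Fin n) (Fin n) ℝ)).trace ≤ G x) :
    volume V ≤ ∫⁻ x in S, ENNReal.ofReal (G x) ^ n := by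
  set C : Set (Matrix (Fin n) (Fin n) ℝ × ℝ) :=
    {z | (z.1 + a • (1 : Matrix (Fin n) (Fin n) ℝ)).PosSemidef ∧
      (z.1 + a • (1 : Matrix (Fin n) (Fin n) ℝ)).trace ≤ z.2} with hC
  have hCc : IsClosed C := by
    have hc : Continuous fun z : Matrix (Fin n) (Fin n) ℝ × ℝ =>
        z.1 + a • (1 : Matrix (Fin n) (Fin n) ℝ) := by fun_prop
    refine IsClosed.inter ((isClosed_psd n).preimage hc) (isClosed_le ?_ continuous_snd)
    exact hc.matrix_trace
  have hcont : ContinuousOn (fun x => (hess n w x, G x)) D := (hess_continuousOn hD hw).prodMk hG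
  obtain ⟨U, hU, hUe⟩ := continuousOn_iff_isClosed.1 hcont C hCc
  set T := S ∩ (U ∩ D) with hT
  have hTm : MeasurableSet T := hS.inter (hU.measurableSet.inter hD.measurableSet)
  have hTS : T ⊆ S := inter_subset_left
  have hTprop : ∀ x ∈ T, (hess n w x, G x) ∈ C := by
    intro x hx
    have := hx.2
    rw [← hUe] at this
    exact this.1
  have hVT : V ⊆ (fun y => gradV n w y + a • y) '' T := by
    intro p hp
    obtain ⟨x, hx, h1, h2, h3⟩ := hV p hp
    refine ⟨x, ⟨hx, ?_⟩, h1⟩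
    rw [← hUe]
    exact ⟨⟨h2, h3⟩, hSD hx⟩
  calc volume V ≤ volume ((fun y => gradV n w y + a • y) '' T) := measure_mono hVT
    _ ≤ ∫⁻ x in T, ENNReal.ofReal |(Matrix.toEuclideanCLM (𝕜 := ℝ)
        (hess n w x + a • (1 : Matrix (Fin n) (Fin n) ℝ))).det| :=
      addHaar_image_le_lintegral_abs_det_fderiv volume hTm fun x hx =>
        (gradV_hasFDerivAt (hw.contDiffAt (hD.mem_nhds (hSD (hTS hx)))) a).hasFDerivWithinAt
    _ ≤ ∫⁻ x in T, ENNReal.ofReal (G x) ^ n := by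
      refine setLIntegral_mono' hTm fun x hx => ?_
      have h1 := hTprop x hx
      have h2 : 0 ≤ G x := (h1.1.trace_nonneg).trans h1.2
      rw [det_toEuclideanCLM, ← ENNReal.ofReal_pow h2]
      refine ENNReal.ofReal_le_ofReal ((det_le_trace_pow h1.1).trans ?_)
      exact pow_le_pow_left₀ h1.1.trace_nonneg h1.2 n
    _ ≤ _ := lintegral_mono_set hTS

end part3

section part4

/-! ## Supersolutions and the contact estimate -/

open MeasureTheory Filter Topology Set
open scoped ENNReal

/-- `‖g⁺‖_{Lⁿ(D)} ≤ F`. -/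
def IntLe (n : ℕ) (g : EuclideanSpace ℝ (Fin n) → ℝ) (D : Set (EuclideanSpace ℝ (Fin n)))
    (F : ℝ) : Prop := ∫⁻ x in D, ENNReal.ofReal (g x) ^ n ≤ ENNReal.ofReal F ^ n

lemma IntLe.mono_set {n : ℕ} {g : EuclideanSpace ℝ (Fin n) → ℝ}
    {D D' : Set (EuclideanSpace ℝ (Fin n))} {F : ℝ} (h : IntLe n g D F) (hD : D' ⊆ D) :
    IntLe n g D' F := (lintegral_mono_set hD).trans h

lemma IntLe.mono {n : ℕ} {g : EuclideanSpace ℝ (Fin n) → ℝ}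
    {D : Set (EuclideanSpace ℝ (Fin n))} {F F' : ℝ} (h : IntLe n g D F) (hF : F ≤ F') :
    IntLe n g D F' := h.trans (by gcongr)

/-- nonnegative supersolutions -/
structure SS (n : ℕ) (lam Lam : ℝ) (b f u : EuclideanSpace ℝ (Fin n) → ℝ)
    (Ω : Set (EuclideanSpace ℝ (Fin n))) : Prop where
  isOpen : IsOpen Ω
  bc : ContinuousOn b Ω
  fc : ContinuousOn f Ω
  uc : ContDiffOn ℝ 2 u Ω
  b0 : ∀ x ∈ Ω, 0 ≤ b x
  f0 : ∀ x ∈ Ω, 0 ≤ f x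
  u0 : ∀ x ∈ Ω, 0 ≤ u x
  eqn : ∀ x ∈ Ω, QQ n lam Lam (hess n u x) (f x + b x * ‖fderiv ℝ u x‖)

lemma SS.mono {n : ℕ} {lam Lam : ℝ} {b f u : EuclideanSpace ℝ (Fin n) → ℝ}
    {Ω D : Set (EuclideanSpace ℝ (Fin n))} (h : SS n lam Lam b f u Ω) (hD : IsOpen D)
    (hDΩ : D ⊆ Ω) : SS n lam Lam b f u D :=
  ⟨hD, h.bc.mono hDΩ, h.fc.mono hDΩ, h.uc.mono hDΩ, fun x hx => h.b0 x (hDΩ hx),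
    fun x hx => h.f0 x (hDΩ hx), fun x hx => h.u0 x (hDΩ hx), fun x hx => h.eqn x (hDΩ hx)⟩

lemma add3_pow_le (x y z : ℝ≥0∞) (n : ℕ) :
    (x + y + z) ^ n ≤ 3 ^ n * (x ^ n + y ^ n + z ^ n) := by
  have h : x + y + z ≤ 3 * max (max x y) z := by
    have h1 : x ≤ max (max x y) z := le_max_of_le_left (le_max_left _ _)
    have h2 : y ≤ max (max x y) z := le_max_of_le_left (le_max_right _ _)
    have h3 : z ≤ max (max x y) z := le_max_right _ _
    calc x + y + z ≤ max (max x y) z + max (max x y) z + max (max x y) z := by gcongr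
      _ = 3 * max (max x y) z := by ring
  calc (x + y + z) ^ n ≤ (3 * max (max x y) z) ^ n := by gcongr
    _ = 3 ^ n * (max (max x y) z) ^ n := mul_pow _ _ _
    _ ≤ 3 ^ n * (x ^ n + y ^ n + z ^ n) := by
      gcongr
      rcases le_total x y with h1 | h1 <;> rcases le_total (max x y) z with h2 | h2 <;>
        simp only [max_eq_left, max_eq_right, h1] at h2 ⊢ <;>
        simp only [h2, max_eq_left, max_eq_right]
      · exact le_add_left le_rfl
      · exact le_add_right (le_add_left le_rfl)
      · exact le_add_left le_rfl
      · rw [add_assoc]; exact le_add_right le_rfl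

lemma int_bound {n : ℕ} {lam Lam : ℝ} (hlam : 0 < lam) {b f u : EuclideanSpace ℝ (Fin n) → ℝ}
    {D S : Set (EuclideanSpace ℝ (Fin n))} (h : SS n lam Lam b f u D) (hS : MeasurableSet S)
    (hSD : S ⊆ D) {L e β γ : ℝ} (hL : 0 ≤ L) (hβ : 0 ≤ β) (hbβ : IntLe n b D β)
    (hfγ : IntLe n f D γ) :
    ∫⁻ x in S, ENNReal.ofReal ((f x + b x * L + e) / lam) ^ n ≤
      ENNReal.ofReal (3 / lam) ^ n * (ENNReal.ofReal γ ^ n + ENNReal.ofReal (β * L) ^ n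
        + ENNReal.ofReal e ^ n * volume S) := by
  have hfm : AEMeasurable f (volume.restrict S) :=
    (h.fc.aemeasurable h.isOpen.measurableSet).mono_measure (Measure.restrict_mono hSD le_rfl)
  have hbm : AEMeasurable b (volume.restrict S) :=
    (h.bc.aemeasurable h.isOpen.measurableSet).mono_measure (Measure.restrict_mono hSD le_rfl)
  have pt : ∀ x, ENNReal.ofReal ((f x + b x * L + e) / lam) ^ n ≤
      ENNReal.ofReal (3 / lam) ^ n * (ENNReal.ofReal (f x) ^ n
        + ENNReal.ofReal L ^ n * ENNReal.ofReal (b x) ^ n + ENNReal.ofReal e ^ n) := by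
    intro x
    have e1 : (f x + b x * L + e) / lam = (1 / lam) * (f x + b x * L + e) := by ring
    have e2 : (3 / lam) = (1 / lam) * 3 := by ring
    rw [e1, e2, ENNReal.ofReal_mul (by positivity), ENNReal.ofReal_mul (by positivity), mul_pow,
      mul_pow, mul_assoc]
    gcongr
    have e3 : ENNReal.ofReal (f x + b x * L + e) ≤
        ENNReal.ofReal (f x) + ENNReal.ofReal L * ENNReal.ofReal (b x) + ENNReal.ofReal e := by
      refine ENNReal.ofReal_add_le.trans ?_
      gcongr
      refine ENNReal.ofReal_add_le.trans ?_
      rw [mul_comm (b x), ENNReal.ofReal_mul hL]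
    calc ENNReal.ofReal (f x + b x * L + e) ^ n ≤ _ := pow_le_pow_left₀ zero_le e3 n
      _ ≤ _ := add3_pow_le _ _ _ n
      _ = _ := by
        rw [mul_pow (ENNReal.ofReal L)]
        norm_num
  refine (lintegral_mono pt).trans ?_
  rw [lintegral_const_mul' _ _ (by finiteness)]
  gcongr
  rw [lintegral_add_right _ measurable_const, lintegral_add_left' (by fun_prop),
    lintegral_const_mul' _ _ (by finiteness), setLIntegral_const]
  gcongr
  · exact (lintegral_mono_set hSD).trans hfγ
  · rw [mul_comm β, ENNReal.ofReal_mul hL, mul_pow]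
    gcongr
    exact (lintegral_mono_set hSD).trans hbβ

lemma SS.contact {n : ℕ} {lam Lam : ℝ} (hlam : 0 < lam)
    {b f u φ : EuclideanSpace ℝ (Fin n) → ℝ}
    {D S V : Set (EuclideanSpace ℝ (Fin n))} (h : SS n lam Lam b f u D)
    (hφ : ContDiffOn ℝ 2 φ D) (hS : MeasurableSet S)
    (hSD : S ⊆ D) {a L Lφ β γ : ℝ} (ha : 0 ≤ a) (hL : 0 ≤ L) (hLφ : 0 ≤ Lφ) (hβ : 0 ≤ β)
    (hbβ : IntLe n b D β) (hfγ : IntLe n f D γ)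
    (hV : ∀ p ∈ V, ∃ x ∈ S,
      IsLocalMin (fun y => (u y - φ y) + a / 2 * ‖y‖ ^ 2 - inner ℝ p y) x ∧
      ‖p - a • x‖ ≤ L ∧ ‖fderiv ℝ φ x‖ ≤ Lφ ∧
      ∀ A, Adm n lam Lam A → 0 ≤ (A * hess n φ x).trace) :
    volume V ≤ ENNReal.ofReal (3 / lam) ^ n * (ENNReal.ofReal γ ^ n
        + ENNReal.ofReal (β * (L + Lφ)) ^ n
        + ENNReal.ofReal (a * (Lam * n)) ^ n * volume S) := by
  refine le_trans ?_ (int_bound hlam h hS hSD (add_nonneg hL hLφ) hβ hbβ hfγ)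
  refine area_contact h.isOpen (h.uc.sub hφ) a ?_ hS hSD ?_
  · exact ((h.fc.add (h.bc.mul continuousOn_const)).add continuousOn_const).div_const _
  · intro p hp
    obtain ⟨x, hxS, hmin, hpL, hφL, hA⟩ := hV p hp
    have hx := hSD hxS
    have hux := h.uc.contDiffAt (h.isOpen.mem_nhds hx)
    have hφx := hφ.contDiffAt (h.isOpen.mem_nhds hx)
    obtain ⟨h1, h2⟩ := contact_point (hux.sub hφx) hmin
    refine ⟨x, hxS, h1, h2, ?_⟩
    have hh : hess n (fun y => u y - φ y) x = hess n u x - hess n φ x := hess_sub hux hφx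
    have hg : ‖fderiv ℝ (fun y => u y - φ y) x‖ ≤ L := by
      rw [← gradV_norm]
      have : gradV n (fun y => u y - φ y) x = p - a • x := eq_sub_of_add_eq h1
      rw [this]; exact hpL
    have hg2 : ‖fderiv ℝ u x‖ ≤ L + Lφ := by
      have e : fderiv ℝ u x = fderiv ℝ (fun y => u y - φ y) x + fderiv ℝ φ x := by
        rw [fderiv_fun_sub (hux.differentiableAt (by norm_num))
          (hφx.differentiableAt (by norm_num))]
        simp
      rw [e]
      exact (norm_add_le _ _).trans (add_le_add hg hφL)
    refine contact_trace hlam ha h2 (U := hess n u x) (P := hess n φ x) ?_ hA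
      (QQ_mono (h.eqn x hx) ?_)
    · rw [hh]; abel
    · gcongr
      exact h.b0 x hx

end part4

section part5

/-! ## ABP estimate and measure estimate -/

open MeasureTheory Filter Topology Set
open scoped ENNReal

lemma exists_contact {n : ℕ} {D K : Set (EuclideanSpace ℝ (Fin n))} (hD : IsOpen D)
    (hK : IsCompact K) (hKD : K ⊆ D) {F : EuclideanSpace ℝ (Fin n) → ℝ} (hF : ContinuousOn F D)
    {x0 : EuclideanSpace ℝ (Fin n)} (hx0 : x0 ∈ D) (hout : ∀ x ∈ D, x ∉ K → F x0 < F x) :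
    ∃ x ∈ D, IsLocalMin F x ∧ F x ≤ F x0 := by
  have hx0K : x0 ∈ K := by
    by_contra h
    exact lt_irrefl _ (hout x0 hx0 h)
  obtain ⟨x, hx, hmin⟩ := hK.exists_isMinOn ⟨x0, hx0K⟩ (hF.mono hKD)
  refine ⟨x, hKD hx, ?_, hmin hx0K⟩
  filter_upwards [hD.mem_nhds (hKD hx)] with y hy
  by_cases hyK : y ∈ K
  · exact hmin hyK
  · exact (hmin hx0K).trans (hout y hy hyK).le

lemma measurableSet_sublevel {n : ℕ} {D : Set (EuclideanSpace ℝ (Fin n))} (hD : IsOpen D)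
    {u : EuclideanSpace ℝ (Fin n) → ℝ} (hu : ContinuousOn u D) (c : ℝ) :
    MeasurableSet {x ∈ D | u x ≤ c} := by
  obtain ⟨U, hU, hUe⟩ := continuousOn_iff_isClosed.1 hu (Iic c) isClosed_Iic
  have : {x ∈ D | u x ≤ c} = U ∩ D := by
    rw [← hUe]; ext x; simp [and_comm]
  rw [this]
  exact hU.measurableSet.inter hD.measurableSet

/-- volume of the unit ball as a real number -/
noncomputable def omegaR (n : ℕ) : ℝ :=
  (volume (Metric.ball (0 : EuclideanSpace ℝ (Fin n)) 1)).toReal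

lemma omegaR_pos (n : ℕ) : 0 < omegaR n :=
  ENNReal.toReal_pos (Metric.measure_ball_pos _ _ one_pos).ne' measure_ball_lt_top.ne

lemma vol_ball {n : ℕ} (hn : 1 ≤ n) (x : EuclideanSpace ℝ (Fin n)) {r : ℝ} (hr : 0 ≤ r) :
    volume (Metric.ball x r) = ENNReal.ofReal (r ^ n * omegaR n) := by
  haveI : Nonempty (Fin n) := ⟨⟨0, hn⟩⟩
  rw [Measure.addHaar_ball _ _ hr, finrank_euclideanSpace_fin, ENNReal.ofReal_mul (by positivity)]
  congr 1
  rw [omegaR, ENNReal.ofReal_toReal measure_ball_lt_top.ne]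

lemma abp (n : ℕ) (hn : 1 ≤ n) (lam Lam : ℝ) (hlam : 0 < lam) :
    ∃ κ0 : ℝ, 0 < κ0 ∧ ∀ (b f u φ : EuclideanSpace ℝ (Fin n) → ℝ)
      (D : Set (EuclideanSpace ℝ (Fin n))) (d β γ Lφ : ℝ), SS n lam Lam b f u D →
      ContDiffOn ℝ 2 φ D → 0 < d → (∀ x ∈ D, ∀ y ∈ D, ‖x - y‖ ≤ d) → 0 ≤ β → 0 ≤ γ → 0 ≤ Lφ →
      IntLe n b D β → IntLe n f D γ → β ≤ κ0 →
      (∀ η > 0, ∃ K, IsCompact K ∧ K ⊆ D ∧ ∀ x ∈ D, x ∉ K → φ x - u x ≤ η) →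
      (∀ x ∈ D, u x < φ x → ‖fderiv ℝ φ x‖ ≤ Lφ ∧
        ∀ A, Adm n lam Lam A → 0 ≤ (A * hess n φ x).trace) →
      ∀ x ∈ D, φ x ≤ u x + d * (γ + Lφ * β) / κ0 := by
  set τ := min 1 (omegaR n / 4) with hτ
  have hω := omegaR_pos n
  have hτ0 : 0 < τ := lt_min one_pos (by positivity)
  have hτ1 : τ ≤ 1 := min_le_left _ _
  have hτ2 : τ ≤ omegaR n / 4 := min_le_right _ _
  refine ⟨lam * τ / 6, by positivity, ?_⟩
  set κ0 := lam * τ / 6 with hκ0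
  have hκpos : 0 < κ0 := by positivity
  intro b f u φ D d β γ Lφ h hφ hd hdiam hβ hγ hLφ hbβ hfγ hβκ hbd heq x0 hx0
  by_contra hcon
  push Not at hcon
  set m := φ x0 - u x0 with hm
  have hm1 : d * (γ + Lφ * β) / κ0 < m := by linarith
  set L := m / d with hL
  have hmL : m = L * d := by rw [hL]; field_simp
  have hLb : γ + Lφ * β < κ0 * L := by
    rw [div_lt_iff₀ hκpos, hmL] at hm1
    have : d * (γ + Lφ * β) < d * (κ0 * L) := by linarith
    exact lt_of_mul_lt_mul_left this hd.le
  have hL0 : 0 < L := by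
    have : 0 < κ0 * L := lt_of_le_of_lt (by positivity) hLb
    exact pos_of_mul_pos_right this hκpos.le
  have hV := h.contact hlam hφ h.isOpen.measurableSet Subset.rfl (a := 0) (L := L) (Lφ := Lφ)
    (V := Metric.ball 0 L) le_rfl hL0.le hLφ hβ hbβ hfγ ?_
  · have h1 : γ ≤ 2 * κ0 * L := by nlinarith [mul_nonneg hLφ hβ, mul_pos hκpos hL0]
    have h2 : β * (L + Lφ) ≤ 2 * κ0 * L := by
      have := mul_le_mul_of_nonneg_right hβκ hL0.le
      nlinarith
    have hn0 : n ≠ 0 := by omega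
    rw [vol_ball hn _ hL0.le, zero_mul, ENNReal.ofReal_zero, zero_pow hn0, zero_mul, add_zero] at hV
    have h3 : ENNReal.ofReal (L ^ n * omegaR n) ≤
        ENNReal.ofReal ((3 / lam) ^ n * ((2 * κ0 * L) ^ n + (2 * κ0 * L) ^ n)) := by
      refine hV.trans ?_
      rw [ENNReal.ofReal_mul (p := (3 / lam) ^ n) (by positivity),
        ENNReal.ofReal_add (by positivity) (by positivity),
        ENNReal.ofReal_pow (p := 3 / lam) (by positivity),
        ENNReal.ofReal_pow (p := 2 * κ0 * L) (by positivity)]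
      gcongr
    rw [ENNReal.ofReal_le_ofReal_iff (by positivity)] at h3
    have h4 : (3 / lam) ^ n * ((2 * κ0 * L) ^ n + (2 * κ0 * L) ^ n) = 2 * τ ^ n * L ^ n := by
      have : 2 * κ0 * L = lam / 3 * (τ * L) := by rw [hκ0]; ring
      rw [← two_mul, ← mul_assoc, mul_comm _ (2 : ℝ), mul_assoc, ← mul_pow, this,
        show 3 / lam * (lam / 3 * (τ * L)) = τ * L by field_simp, mul_pow, mul_assoc]
    have h5 : τ ^ n ≤ τ := pow_le_of_le_one hτ0.le hτ1 hn0
    rw [h4] at h3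
    have h6 : 0 < L ^ n := by positivity
    nlinarith [mul_le_mul_of_nonneg_right h5 h6.le, mul_le_mul_of_nonneg_right hτ2 h6.le,
      mul_pos h6 hω]
  · intro p hp
    have hpL : ‖p‖ < L := by simpa using hp
    have hpm : ‖p‖ * d < m := by rw [hmL]; exact mul_lt_mul_of_pos_right hpL hd
    obtain ⟨K, hK, hKD, hKo⟩ := hbd ((m - ‖p‖ * d) / 2) (by linarith)
    have hin : ∀ y ∈ D, inner ℝ p y - inner ℝ p x0 ≤ ‖p‖ * d := by
      intro y hy
      rw [← inner_sub_right]
      exact (real_inner_le_norm _ _).trans (by gcongr; exact hdiam y hy x0 hx0)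
    have hcont : ContinuousOn (fun y => (u y - φ y) + 0 / 2 * ‖y‖ ^ 2 - inner ℝ p y) D := by
      have c1 := h.uc.continuousOn
      have c2 := hφ.continuousOn
      fun_prop
    have := exists_contact h.isOpen hK hKD hcont hx0 ?_
    · obtain ⟨x, hx, hmin, hle⟩ := this
      have h7 : u x < φ x := by
        have := hin x hx
        simp only [zero_div, zero_mul, add_zero] at hle
        linarith
      refine ⟨x, hx, hmin, by simpa using hpL.le, (heq x hx h7).1, (heq x hx h7).2⟩
    · intro y hy hyK
      have h8 := hKo y hy hyK
      have h9 := hin y hy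
      simp only [zero_div, zero_mul, add_zero]
      linarith

lemma measure_est (n : ℕ) (hn : 1 ≤ n) (lam Lam : ℝ) (hlam : 0 < lam) (hLam : lam ≤ Lam) :
    ∃ η δ : ℝ, 0 < η ∧ 0 < δ ∧ ∀ (b f u : EuclideanSpace ℝ (Fin n) → ℝ)
      (z : EuclideanSpace ℝ (Fin n)) (R t : ℝ), 0 < R → 0 < t →
      SS n lam Lam b f u (Metric.ball z R) →
      IntLe n b (Metric.ball z R) δ → IntLe n f (Metric.ball z R) (δ * t / R) →
      ∀ x1 ∈ Metric.ball z (R / 4), u x1 ≤ t →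
      ENNReal.ofReal η * volume (Metric.ball z R) ≤
        volume {x ∈ Metric.ball z R | u x ≤ 2 * t} := by
  set τ := min 1 (omegaR n / 4) with hτ
  have hω := omegaR_pos n
  have hτ0 : 0 < τ := lt_min one_pos (by positivity)
  have hτ1 : τ ≤ 1 := min_le_left _ _
  have hτ2 : τ ≤ omegaR n / 4 := min_le_right _ _
  have hLam0 : 0 < Lam := hlam.trans_le hLam
  have hn0 : n ≠ 0 := by omega
  have hnR : (0 : ℝ) < n := by exact_mod_cast hn
  refine ⟨(lam / (24 * (Lam * n))) ^ n / 2, lam * τ / 30, by positivity, by positivity, ?_⟩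
  set δ := lam * τ / 30 with hδ
  set η := (lam / (24 * (Lam * n))) ^ n / 2 with hη
  have hδ0 : 0 < δ := by positivity
  have hη0 : 0 < η := by positivity
  intro b f u z R t hR ht h hb hf x1 hx1 hux1
  by_contra hcon
  push Not at hcon
  set S := {x ∈ Metric.ball z R | u x ≤ 2 * t} with hS
  have hSm : MeasurableSet S := measurableSet_sublevel h.isOpen h.uc.continuousOn _
  set a := 8 * t / R ^ 2 with ha
  have ha0 : 0 < a := by positivity
  have hV := h.contact hlam (φ := fun _ => 0) contDiffOn_const hSm (fun x hx => hx.1)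
    (a := a) (L := 10 * t / R) (Lφ := 0)
    (V := Metric.ball (a • z) (a * (R / 4))) ha0.le (by positivity) le_rfl hδ0.le hb hf ?_
  · rw [vol_ball hn _ (by positivity)] at hV hcon
    have hS2 : volume S ≤ ENNReal.ofReal (η * (R ^ n * omegaR n)) := by
      rw [ENNReal.ofReal_mul hη0.le]; exact hcon.le
    have h3 : ENNReal.ofReal ((a * (R / 4)) ^ n * omegaR n) ≤
        ENNReal.ofReal ((3 / lam) ^ n * ((10 * δ * t / R) ^ n + (10 * δ * t / R) ^ n
          + (a * (Lam * n)) ^ n * (η * (R ^ n * omegaR n)))) := by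
      refine hV.trans ?_
      rw [ENNReal.ofReal_mul (p := (3 / lam) ^ n) (by positivity),
        ENNReal.ofReal_add (by positivity) (by positivity),
        ENNReal.ofReal_add (by positivity) (by positivity),
        ENNReal.ofReal_mul (p := (a * (Lam * n)) ^ n) (by positivity),
        ENNReal.ofReal_pow (p := 3 / lam) (by positivity),
        ENNReal.ofReal_pow (p := 10 * δ * t / R) (by positivity),
        ENNReal.ofReal_pow (p := a * (Lam * n)) (by positivity)]
      gcongr
      · nlinarith
      · apply le_of_eq; ring
    rw [ENNReal.ofReal_le_ofReal_iff (by positivity)] at h3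
    have e1 : a * (R / 4) = 2 * (t / R) := by rw [ha]; field_simp; ring
    have e2 : 10 * δ * t / R = lam / 3 * (τ * (t / R)) := by rw [hδ]; ring
    have e3 : (3 / lam) ^ n * (lam / 3 * (τ * (t / R))) ^ n = τ ^ n * (t / R) ^ n := by
      rw [← mul_pow, ← mul_pow]; congr 1; field_simp
    have e4 : (3 / lam) ^ n * ((a * (Lam * n)) ^ n * (η * (R ^ n * omegaR n)))
        = (t / R) ^ n * omegaR n / 2 := by
      have : (3 / lam) ^ n * ((a * (Lam * n)) ^ n * (η * (R ^ n * omegaR n))) =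
        ((3 / lam) * (a * (Lam * n)) * (lam / (24 * (Lam * n))) * R) ^ n * omegaR n / 2 := by
        rw [hη]; simp only [mul_pow]; ring
      rw [this]
      congr 3
      rw [ha]; field_simp; ring
    rw [e1, e2, mul_add, mul_add, e3, e4, mul_pow] at h3
    have h6 : 0 < (t / R) ^ n := by positivity
    have h5 : τ ^ n ≤ τ := pow_le_of_le_one hτ0.le hτ1 hn0
    have h7 : (2 : ℝ) ≤ 2 ^ n := by
      calc (2 : ℝ) = 2 ^ 1 := by norm_num
        _ ≤ 2 ^ n := pow_le_pow_right₀ (by norm_num) hn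
    nlinarith [mul_le_mul_of_nonneg_right h5 h6.le, mul_le_mul_of_nonneg_right hτ2 h6.le,
      mul_pos h6 hω, mul_le_mul_of_nonneg_right h7 (mul_pos h6 hω).le]
  · intro p hp
    set y := a⁻¹ • p with hy
    have hpy : p = a • y := by rw [hy, smul_smul, mul_inv_cancel₀ ha0.ne', one_smul]
    have hyz : ‖y - z‖ < R / 4 := by
      rw [hpy, mem_ball_iff_norm, ← smul_sub, norm_smul, Real.norm_of_nonneg ha0.le] at hp
      exact lt_of_mul_lt_mul_left hp ha0.le
    have hx1z : ‖x1 - z‖ < R / 4 := by rwa [mem_ball_iff_norm] at hx1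
    have hF : ∀ x, (u x - 0) + a / 2 * ‖x‖ ^ 2 - inner ℝ p x
        = u x + a / 2 * ‖x - y‖ ^ 2 - a / 2 * ‖y‖ ^ 2 := by
      intro x
      rw [norm_sub_sq_real, hpy, inner_smul_left, real_inner_comm]
      simp; ring
    have hx1y : a / 2 * ‖x1 - y‖ ^ 2 < t := by
      have h1 : ‖x1 - y‖ < R / 2 := by
        calc ‖x1 - y‖ = ‖(x1 - z) - (y - z)‖ := by congr 1; abel
          _ ≤ ‖x1 - z‖ + ‖y - z‖ := norm_sub_le _ _
          _ < R / 2 := by linarith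
      calc a / 2 * ‖x1 - y‖ ^ 2 < a / 2 * (R / 2) ^ 2 := by gcongr
        _ = t := by rw [ha]; field_simp; ring
    have hcont : ContinuousOn (fun x => (u x - 0) + a / 2 * ‖x‖ ^ 2 - inner ℝ p x)
        (Metric.ball z R) := by
      have c1 := h.uc.continuousOn
      fun_prop
    have := exists_contact h.isOpen
      (isCompact_closedBall z (24 / 25 * R)) (Metric.closedBall_subset_ball (by linarith))
      hcont (Metric.ball_subset_ball (by linarith) hx1) ?_
    · obtain ⟨x, hx, hmin, hle⟩ := this
      rw [hF, hF] at hle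
      refine ⟨x, ⟨hx, ?_⟩, hmin, ?_, by simp, ?_⟩
      · have : 0 ≤ a / 2 * ‖x - y‖ ^ 2 := by positivity
        linarith
      · rw [hpy, ← smul_sub, norm_smul, Real.norm_of_nonneg ha0.le]
        rw [mem_ball_iff_norm] at hx
        have : ‖y - x‖ ≤ 5 / 4 * R := by
          calc ‖y - x‖ = ‖(y - z) - (x - z)‖ := by congr 1; abel
            _ ≤ ‖y - z‖ + ‖x - z‖ := norm_sub_le _ _
            _ ≤ 5 / 4 * R := by linarith
        calc a * ‖y - x‖ ≤ a * (5 / 4 * R) := by gcongr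
          _ = 10 * t / R := by rw [ha]; field_simp; ring
      · intro A _
        have : hess n (fun _ => (0 : ℝ)) x = 0 := by
          ext i j; simp [hess]
        rw [this]; simp
    · intro x hx hxK
      rw [hF, hF]
      have h1 : 24 / 25 * R < ‖x - z‖ := by
        simpa [dist_eq_norm] using hxK
      have h2 : 71 / 100 * R ≤ ‖x - y‖ := by
        have : ‖x - z‖ ≤ ‖x - y‖ + ‖y - z‖ := by
          calc ‖x - z‖ = ‖(x - y) + (y - z)‖ := by congr 1; abel
            _ ≤ _ := norm_add_le _ _
        linarith
      have h3 : 2 * t ≤ a / 2 * ‖x - y‖ ^ 2 := by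
        calc 2 * t ≤ 4 * (71 / 100) ^ 2 * t := by nlinarith
          _ = a / 2 * (71 / 100 * R) ^ 2 := by rw [ha]; field_simp; ring
          _ ≤ a / 2 * ‖x - y‖ ^ 2 := by gcongr
      have h4 := h.u0 x hx
      linarith

end part5

section part6

/-! ## Barriers and doubling -/

open MeasureTheory Filter Topology Set
open scoped ENNReal

section barrier

variable {n : ℕ} (z : EuclideanSpace ℝ (Fin n)) (k : Fin n) (c1 c2 : ℝ) {F F1 F2 : ℝ → ℝ}

lemma barrier_fderiv (hF : ∀ s, HasDerivAt F (F1 s) s) (x : EuclideanSpace ℝ (Fin n)) :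
    HasFDerivAt (fun y : EuclideanSpace ℝ (Fin n) => F (‖y - z‖ ^ 2) + (c1 * y k + c2 * (y k) ^ 2))
      ((F1 (‖x - z‖ ^ 2)) • (2 • innerSL ℝ (x - z)) +
        (c1 + 2 * c2 * x k) • (EuclideanSpace.proj k : EuclideanSpace ℝ (Fin n) →L[ℝ] ℝ)) x := by
  have h1 : HasFDerivAt (fun y : EuclideanSpace ℝ (Fin n) => ‖y - z‖ ^ 2)
      (2 • innerSL ℝ (x - z)) x := by
    have h0 : HasFDerivAt (fun y : EuclideanSpace ℝ (Fin n) => y - z)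
      (ContinuousLinearMap.id ℝ _) x := (hasFDerivAt_id x).sub_const z
    have := h0.norm_sq
    exact this
  have h2 := (hF (‖x - z‖ ^ 2)).comp_hasFDerivAt x h1
  have h3 : HasFDerivAt (fun y : EuclideanSpace ℝ (Fin n) => y k)
      (EuclideanSpace.proj k : EuclideanSpace ℝ (Fin n) →L[ℝ] ℝ) x :=
    (EuclideanSpace.proj k : EuclideanSpace ℝ (Fin n) →L[ℝ] ℝ).hasFDerivAt
  have h4 := (h3.const_mul c1).add ((h3.pow 2).const_mul c2)
  refine (h2.add h4).congr_fderiv ?_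
  ext v
  simp
  ring

lemma barrier_norm (hF : ∀ s, HasDerivAt F (F1 s) s) (x : EuclideanSpace ℝ (Fin n)) :
    ‖fderiv ℝ (fun y : EuclideanSpace ℝ (Fin n) =>
      F (‖y - z‖ ^ 2) + (c1 * y k + c2 * (y k) ^ 2)) x‖ ≤
      2 * |F1 (‖x - z‖ ^ 2)| * ‖x - z‖ + |c1 + 2 * c2 * x k| := by
  rw [(barrier_fderiv z k c1 c2 hF x).fderiv]
  refine ContinuousLinearMap.opNorm_le_bound _ (by positivity) fun v => ?_
  simp only [add_apply, smul_apply, innerSL_apply_apply, smul_eq_mul,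
    PiLp.proj_apply, nsmul_eq_mul]
  have h1 : |inner ℝ (x - z) v| ≤ ‖x - z‖ * ‖v‖ := abs_real_inner_le_norm _ _
  have h2 : |v k| ≤ ‖v‖ := PiLp.norm_apply_le v k
  refine (abs_add_le _ _).trans ?_
  rw [abs_mul, abs_mul, abs_mul]
  norm_num
  have := mul_le_mul_of_nonneg_left h1 (abs_nonneg (F1 (‖x - z‖ ^ 2)))
  have := mul_le_mul_of_nonneg_left h2 (abs_nonneg (c1 + 2 * c2 * x k))
  nlinarith

lemma barrier_hess (hF : ∀ s, HasDerivAt F (F1 s) s) (hF1 : ∀ s, HasDerivAt F1 (F2 s) s)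
    (x : EuclideanSpace ℝ (Fin n)) :
    hess n (fun y : EuclideanSpace ℝ (Fin n) =>
      F (‖y - z‖ ^ 2) + (c1 * y k + c2 * (y k) ^ 2)) x =
      (2 * F1 (‖x - z‖ ^ 2)) • (1 : Matrix (Fin n) (Fin n) ℝ)
      + (4 * F2 (‖x - z‖ ^ 2)) • Matrix.vecMulVec (fun i => x i - z i) (fun i => x i - z i)
      + (2 * c2) • Matrix.vecMulVec (Pi.single k 1) (Pi.single k 1) := by
  ext i j
  unfold hess
  have e : (fun y => fderiv ℝ (fun y : EuclideanSpace ℝ (Fin n) =>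
      F (‖y - z‖ ^ 2) + (c1 * y k + c2 * (y k) ^ 2)) y (EuclideanSpace.single j (1 : ℝ))) =
      fun y => F1 (‖y - z‖ ^ 2) * (2 * (y j - z j)) + (c1 + 2 * c2 * y k) *
        (Pi.single k (1 : ℝ) : Fin n → ℝ) j := by
    funext y
    rw [(barrier_fderiv z k c1 c2 hF y).fderiv]
    simp only [add_apply, smul_apply, innerSL_apply_apply, smul_eq_mul,
      PiLp.proj_apply, nsmul_eq_mul, EuclideanSpace.inner_single_right]
    simp [Pi.single_apply, eq_comm]
  rw [e]
  have h1 : HasFDerivAt (fun y : EuclideanSpace ℝ (Fin n) => ‖y - z‖ ^ 2)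
      (2 • innerSL ℝ (x - z)) x := by
    have h0 : HasFDerivAt (fun y : EuclideanSpace ℝ (Fin n) => y - z)
      (ContinuousLinearMap.id ℝ _) x := (hasFDerivAt_id x).sub_const z
    have := h0.norm_sq
    exact this
  have h2 := (hF1 (‖x - z‖ ^ 2)).comp_hasFDerivAt x h1
  have h3 : ∀ l : Fin n, HasFDerivAt (fun y : EuclideanSpace ℝ (Fin n) => y l)
      (EuclideanSpace.proj l : EuclideanSpace ℝ (Fin n) →L[ℝ] ℝ) x := fun l =>
    (EuclideanSpace.proj l : EuclideanSpace ℝ (Fin n) →L[ℝ] ℝ).hasFDerivAt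
  have h4 := (h2.mul (((h3 j).sub_const (z j)).const_mul 2)).add
    ((((h3 k).const_mul (2 * c2)).const_add c1).mul_const ((Pi.single k (1 : ℝ) : Fin n → ℝ) j))
  have h5 := h4.fderiv
  simp only [Function.comp_def] at h5
  have h6 : (fun y : EuclideanSpace ℝ (Fin n) => F1 (‖y - z‖ ^ 2) * (2 * (y j - z j)) +
      (c1 + 2 * c2 * y k) * (Pi.single k (1 : ℝ) : Fin n → ℝ) j) =
    ((fun x : EuclideanSpace ℝ (Fin n) => F1 (‖x - z‖ ^ 2)) * (fun y => 2 * (y j - z j)) +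
    fun y => (c1 + 2 * c2 * y k) * (Pi.single k (1 : ℝ) : Fin n → ℝ) j) := by
    ext y; simp
  rw [h6, h5]
  simp only [add_apply, smul_apply, innerSL_apply_apply, smul_eq_mul,
      PiLp.proj_apply, nsmul_eq_mul, EuclideanSpace.inner_single_right, Matrix.add_apply,
      Matrix.smul_apply, Matrix.vecMulVec_apply, Matrix.one_apply]
  simp [Pi.single_apply, eq_comm]
  by_cases hij : i = j
  · subst hij; simp; ring
  · simp [hij]; split_ifs <;> ring

lemma barrier_contDiff (hF : ContDiff ℝ 2 F) :
    ContDiff ℝ 2 (fun y : EuclideanSpace ℝ (Fin n) =>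
      F (‖y - z‖ ^ 2) + (c1 * y k + c2 * (y k) ^ 2)) := by
  have h1 : ContDiff ℝ 2 (fun y : EuclideanSpace ℝ (Fin n) => ‖y - z‖ ^ 2) :=
    (contDiff_id.sub contDiff_const).norm_sq ℝ
  have h3 : ContDiff ℝ 2 (fun y : EuclideanSpace ℝ (Fin n) => y k) :=
    (EuclideanSpace.proj k : EuclideanSpace ℝ (Fin n) →L[ℝ] ℝ).contDiff
  exact (hF.comp h1).add ((contDiff_const.mul h3).add (contDiff_const.mul (h3.pow 2)))

lemma barrier_sub (hF : ∀ s, HasDerivAt F (F1 s) s) (hF1 : ∀ s, HasDerivAt F1 (F2 s) s)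
    (x : EuclideanSpace ℝ (Fin n)) {lam Lam : ℝ} (h1 : F1 (‖x - z‖ ^ 2) ≤ 0)
    (h2 : 0 ≤ F2 (‖x - z‖ ^ 2)) (hc2 : 0 ≤ c2)
    (h : 0 ≤ F1 (‖x - z‖ ^ 2) * (Lam * n) + 2 * F2 (‖x - z‖ ^ 2) * (lam * ‖x - z‖ ^ 2)
      + c2 * lam) :
    ∀ A, Adm n lam Lam A → 0 ≤ (A * hess n (fun y : EuclideanSpace ℝ (Fin n) =>
      F (‖y - z‖ ^ 2) + (c1 * y k + c2 * (y k) ^ 2)) x).trace := by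
  intro A hA
  rw [barrier_hess z k c1 c2 hF hF1]
  apply barrier_adm hA _ _ _ _ _ (by linarith) (by linarith) (by linarith)
  have e1 : ∑ i, (x i - z i) ^ 2 = ‖x - z‖ ^ 2 := by
    rw [EuclideanSpace.norm_sq_eq]; simp
  have e2 : ∑ i, (Pi.single k (1 : ℝ) : Fin n → ℝ) i ^ 2 = 1 := by
    simp [Pi.single_apply]
  rw [e1, e2]
  linarith

end barrier

end part6

section part7

open MeasureTheory Filter Topology Set
open scoped ENNReal

lemma doubling (n : ℕ) (hn : 1 ≤ n) (lam Lam : ℝ) (hlam : 0 < lam) (hLam : lam ≤ Lam) :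
    ∃ c0 δ C : ℝ, 0 < c0 ∧ c0 ≤ 1 / 2 ∧ 0 < δ ∧ 0 < C ∧ ∀ (b f u : EuclideanSpace ℝ (Fin n) → ℝ)
      (z : EuclideanSpace ℝ (Fin n)) (R t γ : ℝ), 0 < R → 0 ≤ t → 0 ≤ γ →
      SS n lam Lam b f u (Metric.ball z R) →
      IntLe n b (Metric.ball z R) δ → IntLe n f (Metric.ball z R) γ →
      (∀ x ∈ Metric.ball z (R / 64), t ≤ u x) →
      ∀ x ∈ Metric.ball z (R / 2), c0 * t - C * R * γ ≤ u x := by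
  obtain ⟨κ0, hκ0, habp⟩ := abp n hn lam Lam hlam
  have hLam0 : 0 < Lam := hlam.trans_le hLam
  obtain ⟨m, hm⟩ := exists_nat_ge (Lam * n * 4096 / (2 * lam))
  have hm' : Lam * n * 4096 ≤ 2 * (m + 1) * lam := by
    rw [div_le_iff₀ (by positivity)] at hm
    nlinarith
  set k : ℝ := (m : ℝ) + 2 with hk
  have hk0 : 0 < k := by positivity
  have hQ1 : ((3 : ℝ) / 4) ^ (m + 2) ≤ 1 := pow_le_one₀ (by norm_num) (by norm_num)
  refine ⟨(3 / 4) ^ (m + 2) / 2, min κ0 ((3 / 4) ^ (m + 2) * κ0 / (8 * k)), 2 / κ0,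
    by positivity, by linarith, by positivity, by positivity, ?_⟩
  set δ := min κ0 ((3 / 4) ^ (m + 2) * κ0 / (8 * k)) with hδ
  have hδ0 : 0 < δ := by positivity
  have hδ1 : δ ≤ κ0 := min_le_left _ _
  have hδ2 : δ ≤ (3 / 4) ^ (m + 2) * κ0 / (8 * k) := min_le_right _ _
  intro b f u z R t γ hR ht hγ h hb hf hu x hx
  set F : ℝ → ℝ := fun s => t * (1 - s / R ^ 2) ^ (m + 2) with hF
  set F1 : ℝ → ℝ := fun s => -(t * k / R ^ 2) * (1 - s / R ^ 2) ^ (m + 1) with hF1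
  set F2 : ℝ → ℝ := fun s => (t * k / R ^ 2) * ((m + 1) / R ^ 2) * (1 - s / R ^ 2) ^ m with hF2
  have dl : ∀ s : ℝ, HasDerivAt (fun s : ℝ => 1 - s / R ^ 2) (-(1 / R ^ 2)) s := fun s =>
    ((hasDerivAt_id s).div_const _).const_sub 1
  have hd1 : ∀ s, HasDerivAt F (F1 s) s := by
    intro s
    have := ((dl s).fun_pow (m + 2)).const_mul t
    refine this.congr_deriv ?_
    simp only [hF1, hk]; push_cast; simp; ring
  have hd2 : ∀ s, HasDerivAt F1 (F2 s) s := by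
    intro s
    have := ((dl s).fun_pow (m + 1)).const_mul (-(t * k / R ^ 2))
    refine this.congr_deriv ?_
    simp only [hF2]; push_cast; simp; ring
  have hFc : ContDiff ℝ 2 F := by
    simp only [hF]; fun_prop
  set i0 : Fin n := ⟨0, hn⟩
  set φ : EuclideanSpace ℝ (Fin n) → ℝ := fun y => F (‖y - z‖ ^ 2) + (0 * y i0 + 0 * (y i0) ^ 2)
    with hφ
  have hφe : ∀ y, φ y = t * (1 - ‖y - z‖ ^ 2 / R ^ 2) ^ (m + 2) := by
    intro y; simp [hφ, hF]
  have hφc : ContDiff ℝ 2 φ := barrier_contDiff z i0 0 0 hFc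
  have hball : ∀ y ∈ Metric.ball z R, 0 ≤ 1 - ‖y - z‖ ^ 2 / R ^ 2 ∧
      1 - ‖y - z‖ ^ 2 / R ^ 2 ≤ 1 := by
    intro y hy
    rw [mem_ball_iff_norm] at hy
    constructor
    · rw [sub_nonneg, div_le_one (by positivity)]
      gcongr
    · have : 0 ≤ ‖y - z‖ ^ 2 / R ^ 2 := by positivity
      linarith
  have key := habp b f u φ (Metric.ball z R) (2 * R) δ γ (2 * t * k / R) h hφc.contDiffOn
    (by positivity) ?_ hδ0.le hγ (by positivity) hb hf hδ1 ?_ ?_ x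
    (Metric.ball_subset_ball (by linarith) hx)
  · have h1 : t * (3 / 4) ^ (m + 2) ≤ φ x := by
      rw [hφe]
      rw [mem_ball_iff_norm] at hx
      have : ‖x - z‖ ^ 2 / R ^ 2 ≤ 1 / 4 := by
        rw [div_le_iff₀ (by positivity)]
        nlinarith [norm_nonneg (x - z)]
      gcongr
      linarith
    have h2 : 2 * R * (γ + 2 * t * k / R * δ) / κ0 ≤ 2 / κ0 * R * γ + (3 / 4) ^ (m + 2) / 2 * t := by
      have e : 2 * R * (γ + 2 * t * k / R * δ) / κ0 = 2 / κ0 * R * γ + (4 * t * k / κ0) * δ := by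
        field_simp; ring
      have e2 : (4 * t * k / κ0) * ((3 / 4) ^ (m + 2) * κ0 / (8 * k)) = (3 / 4) ^ (m + 2) / 2 * t := by
        field_simp; ring
      rw [e, ← e2]
      gcongr
    linarith
  · intro x hx y hy
    rw [← dist_eq_norm]
    have := dist_triangle_right x y z
    rw [Metric.mem_ball] at hx hy
    linarith
  · intro η hη
    refine ⟨Metric.closedBall z R ∩ {y | η ≤ φ y}, ?_, ?_, ?_⟩
    · exact (isCompact_closedBall z R).inter_right (isClosed_le continuous_const hφc.continuous)
    · rintro y ⟨hy1, hy2⟩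
      rw [Metric.mem_ball]
      refine lt_of_le_of_ne hy1 fun he => ?_
      rw [mem_setOf_eq, hφe, ← dist_eq_norm, he, div_self (by positivity)] at hy2
      simp at hy2
      linarith
    · intro y hy hyK
      have h1 : φ y < η := by
        by_contra hc
        exact hyK ⟨Metric.ball_subset_closedBall hy, not_lt.1 hc⟩
      have := h.u0 y hy
      linarith
  · intro y hy huy
    obtain ⟨hy0, hy1⟩ := hball y hy
    have hys : (R / 64) ^ 2 ≤ ‖y - z‖ ^ 2 := by
      by_contra hc
      push Not at hc
      have : ‖y - z‖ < R / 64 := lt_of_pow_lt_pow_left₀ 2 (by positivity) hc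
      have h1 := hu y (by rwa [mem_ball_iff_norm])
      rw [hφe] at huy
      have := mul_le_mul_of_nonneg_left (pow_le_one₀ (n := m + 2) hy0 hy1) ht
      linarith
    have hyR : ‖y - z‖ ≤ R := by rw [mem_ball_iff_norm] at hy; exact hy.le
    constructor
    · refine (barrier_norm z i0 0 0 hd1 y).trans ?_
      simp only [hF1, neg_mul, abs_neg]
      rw [abs_of_nonneg (by positivity)]
      have := pow_le_one₀ (n := m + 1) hy0 hy1
      calc 2 * (t * k / R ^ 2 * (1 - ‖y - z‖ ^ 2 / R ^ 2) ^ (m + 1)) * ‖y - z‖ + |0 + 2 * 0 * y i0|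
          ≤ 2 * (t * k / R ^ 2 * 1) * R + 0 := by
            gcongr
            simp
        _ = 2 * t * k / R := by field_simp; ring
    · apply barrier_sub z i0 0 0 hd1 hd2 y
      · simp only [hF1, neg_mul, Left.neg_nonpos_iff]; positivity
      · simp only [hF2]; positivity
      · exact le_rfl
      · simp only [hF1, hF2]
        have : -(t * k / R ^ 2) * (1 - ‖y - z‖ ^ 2 / R ^ 2) ^ (m + 1) * (Lam * ↑n) +
        2 * (t * k / R ^ 2 * ((↑m + 1) / R ^ 2) * (1 - ‖y - z‖ ^ 2 / R ^ 2) ^ m) *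
          (lam * ‖y - z‖ ^ 2) + 0 * lam = (t * k / R ^ 2) * (1 - ‖y - z‖ ^ 2 / R ^ 2) ^ m *
          (2 * (m + 1) * lam * (‖y - z‖ ^ 2 / R ^ 2) - (1 - ‖y - z‖ ^ 2 / R ^ 2) * (Lam * n)) := by
          rw [pow_succ]; ring
        rw [this]
        apply mul_nonneg (by positivity)
        have h3 : 1 / 4096 ≤ ‖y - z‖ ^ 2 / R ^ 2 := by
          rw [le_div_iff₀ (by positivity)]
          linarith
        have h4 : 0 ≤ Lam * n := by positivity
        nlinarith

/-- measure-to-pointwise with expansion -/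
lemma crit (n : ℕ) (hn : 1 ≤ n) (lam Lam : ℝ) (hlam : 0 < lam) (hLam : lam ≤ Lam) :
    ∃ η δ M : ℝ, 0 < η ∧ 0 < δ ∧ 1 < M ∧ ∀ (b f u : EuclideanSpace ℝ (Fin n) → ℝ)
      (z : EuclideanSpace ℝ (Fin n)) (R t : ℝ), 0 < R → 0 < t →
      SS n lam Lam b f u (Metric.ball z (16 * R)) →
      IntLe n b (Metric.ball z (16 * R)) δ →
      IntLe n f (Metric.ball z (16 * R)) (δ * t / R) →
      volume {x ∈ Metric.ball z R | u x ≤ M * t} < ENNReal.ofReal η * volume (Metric.ball z R) →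
      ∀ x ∈ Metric.ball z (8 * R), t < u x := by
  obtain ⟨η, δ1, hη, hδ1, hm⟩ := measure_est n hn lam Lam hlam hLam
  obtain ⟨c0, δ2, C, hc0, hc01, hδ2, hC, hd⟩ := doubling n hn lam Lam hlam hLam
  refine ⟨η, min (min δ1 δ2) (1 / (32 * C)), 8 / c0, hη, by positivity, ?_, ?_⟩
  · rw [lt_div_iff₀ hc0]; linarith
  set δ := min (min δ1 δ2) (1 / (32 * C)) with hδ
  have hδ0 : 0 < δ := by positivity
  have h1 : δ ≤ δ1 := (min_le_left _ _).trans (min_le_left _ _)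
  have h2 : δ ≤ δ2 := (min_le_left _ _).trans (min_le_right _ _)
  have h3 : δ ≤ 1 / (32 * C) := min_le_right _ _
  intro b f u z R t hR ht h hb hf hv x hx
  have hs : Metric.ball z R ⊆ Metric.ball z (16 * R) := Metric.ball_subset_ball (by linarith)
  have hge : ∀ x ∈ Metric.ball z (16 * R / 64), 4 * t / c0 ≤ u x := by
    intro x1 hx1
    by_contra hc
    push Not at hc
    have := hm b f u z R (4 * t / c0) hR (by positivity) (h.mono Metric.isOpen_ball hs)
      ((hb.mono_set hs).mono h1) ((hf.mono_set hs).mono ?_) x1 ?_ hc.le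
    · rw [show 2 * (4 * t / c0) = 8 / c0 * t by ring] at this
      exact absurd hv (not_lt.2 this)
    · gcongr
      rw [le_div_iff₀ hc0]; nlinarith
    · convert hx1 using 2; ring
  have := hd b f u z (16 * R) (4 * t / c0) (δ * t / R) (by linarith) (by positivity) (by positivity)
    h (hb.mono h2) hf hge x (by convert hx using 2; ring)
  have e1 : c0 * (4 * t / c0) = 4 * t := by field_simp
  have e2 : C * (16 * R) * (δ * t / R) = 16 * C * t * δ := by field_simp
  have e3 : 16 * C * t * δ ≤ t / 2 := by
    calc 16 * C * t * δ ≤ 16 * C * t * (1 / (32 * C)) := by gcongr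
      _ = t / 2 := by field_simp; norm_num
  linarith

end part7

section part8

/-! ## Ink spots -/

open MeasureTheory Filter Topology Set
open scoped ENNReal

lemma vitali_cover {n : ℕ} (A : Set (EuclideanSpace ℝ (Fin n)))
    (y : EuclideanSpace ℝ (Fin n) → EuclideanSpace ℝ (Fin n))
    (r : EuclideanSpace ℝ (Fin n) → ℝ) (R0 : ℝ) (hr0 : ∀ x ∈ A, 0 < r x) (hr : ∀ x ∈ A, r x ≤ R0)
    (hx : ∀ x ∈ A, x ∈ Metric.closedBall (y x) (r x)) :
    ∃ U ⊆ A, U.Countable ∧ U.PairwiseDisjoint (fun x => Metric.closedBall (y x) (r x)) ∧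
      A ⊆ ⋃ x ∈ U, Metric.closedBall (y x) (4 * r x) := by
  obtain ⟨U, hUA, hdisj, hcov⟩ := Vitali.exists_disjoint_subfamily_covering_enlargement_closedBall
    A y r R0 hr 4 (by norm_num)
  refine ⟨U, hUA, ?_, hdisj, ?_⟩
  · refine hdisj.countable_of_nonempty_interior fun x hxU => ?_
    refine ⟨y x, ?_⟩
    exact Metric.ball_subset_interior_closedBall (Metric.mem_ball_self (hr0 x (hUA hxU)))
  · intro x hxA
    obtain ⟨w, hw, hsub⟩ := hcov x hxA
    exact mem_biUnion hw (hsub (hx x hxA))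

lemma vol_closedBall {n : ℕ} (hn : 1 ≤ n) (x : EuclideanSpace ℝ (Fin n)) {r : ℝ} (hr : 0 ≤ r) :
    volume (Metric.closedBall x r) = ENNReal.ofReal (r ^ n * omegaR n) := by
  have : Nonempty (Fin n) := ⟨⟨0, hn⟩⟩
  rw [← vol_ball hn x hr, Measure.addHaar_closedBall_eq_addHaar_ball]

lemma spread (n : ℕ) (hn : 1 ≤ n) {η : ℝ} (hη : 0 < η)
    {A G : Set (EuclideanSpace ℝ (Fin n))} (hG : MeasurableSet G)
    (y : EuclideanSpace ℝ (Fin n) → EuclideanSpace ℝ (Fin n))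
    (r : EuclideanSpace ℝ (Fin n) → ℝ) (R0 : ℝ) (hr0 : ∀ x ∈ A, 0 < r x) (hr : ∀ x ∈ A, r x ≤ R0)
    (hx : ∀ x ∈ A, x ∈ Metric.closedBall (y x) (r x))
    (hd : ∀ x ∈ A, ENNReal.ofReal η * volume (Metric.ball (y x) (r x)) ≤
      volume (G ∩ Metric.closedBall (y x) (r x))) :
    ENNReal.ofReal (η / 4 ^ n) * volume A ≤ volume G := by
  obtain ⟨U, hUA, hUc, hdisj, hcov⟩ := vitali_cover A y r R0 hr0 hr hx
  have : Countable U := hUc.to_subtype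
  have h1 : volume A ≤ ∑' x : U, volume (Metric.closedBall (y x) (4 * r x)) := by
    refine (measure_mono hcov).trans ?_
    exact measure_biUnion_le _ hUc _
  have h2 : ∑' x : U, volume (G ∩ Metric.closedBall (y x) (r x)) ≤ volume G := by
    rw [← measure_iUnion]
    · exact measure_mono (iUnion_subset fun x => inter_subset_left)
    · intro a b hab
      have := hdisj a.2 b.2 (fun h => hab (Subtype.ext h))
      exact this.mono inter_subset_right inter_subset_right
    · intro x; exact hG.inter Metric.isClosed_closedBall.measurableSet
  calc ENNReal.ofReal (η / 4 ^ n) * volume A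
      ≤ ENNReal.ofReal (η / 4 ^ n) * ∑' x : U, volume (Metric.closedBall (y x) (4 * r x)) := by
        gcongr
    _ = ∑' x : U, ENNReal.ofReal (η / 4 ^ n) * volume (Metric.closedBall (y x) (4 * r x)) :=
        ENNReal.tsum_mul_left.symm
    _ ≤ ∑' x : U, volume (G ∩ Metric.closedBall (y x) (r x)) := by
        refine ENNReal.tsum_le_tsum fun x => ?_
        refine le_trans (le_of_eq ?_) (hd x (hUA x.2))
        have hrx := hr0 x (hUA x.2)
        rw [vol_closedBall hn _ (by positivity), vol_ball hn _ hrx.le,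
          ← ENNReal.ofReal_mul (by positivity), ← ENNReal.ofReal_mul (by positivity)]
        congr 1
        rw [mul_pow]; field_simp
    _ ≤ volume G := h2

lemma ink (n : ℕ) (hn : 1 ≤ n) (lam Lam : ℝ) (hlam : 0 < lam) (hLam : lam ≤ Lam) :
    ∃ c δ M : ℝ, 0 < c ∧ c < 1 ∧ 0 < δ ∧ 1 < M ∧ ∀ (b f u : EuclideanSpace ℝ (Fin n) → ℝ)
      (z : EuclideanSpace ℝ (Fin n)) (ρ t : ℝ), 0 < ρ → 0 < t →
      SS n lam Lam b f u (Metric.ball z (9 * ρ)) →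
      IntLe n b (Metric.ball z (9 * ρ)) δ →
      IntLe n f (Metric.ball z (9 * ρ)) (δ * t / ρ) →
      ∀ x1 ∈ Metric.ball z ρ, u x1 ≤ t →
      ∀ s, t ≤ s → volume {x ∈ Metric.ball z ρ | M * s < u x} ≤
        ENNReal.ofReal (1 - c) * volume {x ∈ Metric.ball z ρ | s < u x} := by
  obtain ⟨η, δ, M, hη, hδ, hM, hcrit⟩ := crit n hn lam Lam hlam hLam
  refine ⟨min (η / 4 ^ n) (1 / 2), δ, M, by positivity, ?_, hδ, hM, ?_⟩
  · exact (min_le_right _ _).trans_lt (by norm_num)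
  set c := min (η / 4 ^ n) (1 / 2) with hc
  have hc0 : 0 < c := by positivity
  have hc1 : c ≤ η / 4 ^ n := min_le_left _ _
  have hc2 : c ≤ 1 / 2 := min_le_right _ _
  intro b f u z ρ t hρ ht h hb hf x1 hx1 hux1 s hs
  have hs0 : 0 < s := ht.trans_le hs
  set B := Metric.ball z ρ with hB
  have hBO : IsOpen B := Metric.isOpen_ball
  have hBsub : B ⊆ Metric.ball z (9 * ρ) := Metric.ball_subset_ball (by linarith)
  have huc : ContinuousOn u B := h.uc.continuousOn.mono hBsub
  set A := {x ∈ B | s < u x} with hA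
  set A' := {x ∈ B | M * s < u x} with hA'
  have hAO : IsOpen A := huc.isOpen_inter_preimage hBO isOpen_Ioi
  have hAO' : IsOpen A' := huc.isOpen_inter_preimage hBO isOpen_Ioi
  have hA'A : A' ⊆ A := fun x hx => ⟨hx.1, by nlinarith [hx.2]⟩
  set S := {x ∈ B | u x ≤ s} with hS
  have hx1S : x1 ∈ S := ⟨hx1, hux1.trans hs⟩
  have hSne : S.Nonempty := ⟨x1, hx1S⟩
  set r : EuclideanSpace ℝ (Fin n) → ℝ := fun x => Metric.infDist x S with hr
  set y : EuclideanSpace ℝ (Fin n) → EuclideanSpace ℝ (Fin n) :=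
    fun x => x + (r x / (4 * ρ)) • (z - x) with hy
  have hr0 : ∀ x ∈ A, 0 < r x := by
    intro x hx
    obtain ⟨e, he, hball⟩ := Metric.isOpen_iff.1 hAO x hx
    refine lt_of_lt_of_le he ?_
    rw [hr, Metric.le_infDist hSne]
    intro w hw
    by_contra hcon
    push Not at hcon
    have : w ∈ A := hball (by rw [Metric.mem_ball, dist_comm]; exact hcon)
    exact absurd this.2 (not_lt.2 hw.2)
  have hr2 : ∀ x ∈ A, r x < 2 * ρ := by
    intro x hx
    have h1 : r x ≤ dist x x1 := Metric.infDist_le_dist_of_mem hx1S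
    have h2 := dist_triangle_right x x1 z
    have h3 : dist x z < ρ := hx.1
    have h4 : dist x1 z < ρ := hx1
    linarith
  have hxy : ∀ x ∈ A, dist x (y x) ≤ r x / 4 := by
    intro x hx
    have h3 : dist x z < ρ := hx.1
    have hrx := hr0 x hx
    rw [hy, dist_eq_norm, sub_add_cancel_left, norm_neg, norm_smul, Real.norm_of_nonneg (by positivity),
      norm_sub_rev, ← dist_eq_norm]
    calc r x / (4 * ρ) * dist x z ≤ r x / (4 * ρ) * ρ := by gcongr
      _ = r x / 4 := by field_simp
  have hyz : ∀ x ∈ A, dist (y x) z + r x / 4 < ρ := by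
    intro x hx
    have h3 : dist x z < ρ := hx.1
    have hrx := hr0 x hx
    have hrx2 := hr2 x hx
    have e : y x - z = (1 - r x / (4 * ρ)) • (x - z) := by
      simp only [hy]; module
    have h5 : r x / (4 * ρ) < 1 := by rw [div_lt_one (by positivity)]; linarith
    rw [dist_eq_norm, e, norm_smul, Real.norm_of_nonneg (by linarith), ← dist_eq_norm]
    calc (1 - r x / (4 * ρ)) * dist x z + r x / 4 < (1 - r x / (4 * ρ)) * ρ + r x / 4 := by
          gcongr
      _ = ρ := by field_simp; ring
  have hsubA : ∀ x ∈ A, Metric.closedBall (y x) (r x / 4) ⊆ A := by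
    intro x hx w hw
    have hw' : dist w (y x) ≤ r x / 4 := hw
    have h1 := dist_triangle w (y x) z
    have h2 := hyz x hx
    have hwB : w ∈ B := by rw [hB, Metric.mem_ball]; linarith
    refine ⟨hwB, ?_⟩
    by_contra hcon
    have hwS : w ∈ S := ⟨hwB, not_lt.1 hcon⟩
    have h3 : r x ≤ dist x w := Metric.infDist_le_dist_of_mem hwS
    have h4 := dist_triangle_right x w (y x)
    have := hxy x hx
    have := hr0 x hx
    linarith
  have hGm : MeasurableSet (A \ A') := hAO.measurableSet.diff hAO'.measurableSet
  have key := spread n hn hη (A := A) hGm y (fun x => r x / 4) (2 * ρ)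
    (fun x hx => by have := hr0 x hx; positivity)
    (fun x hx => by have := hr2 x hx; have := hr0 x hx; linarith)
    (fun x hx => hxy x hx) ?_
  · have hfin : volume A ≠ ∞ := (measure_mono (fun x hx => hx.1 : A ⊆ B)).trans_lt
      measure_ball_lt_top |>.ne
    have hfin' : volume A' ≠ ∞ := (measure_mono hA'A).trans_lt hfin.lt_top |>.ne
    have e1 : volume A' + ENNReal.ofReal c * volume A ≤ volume A := by
      calc volume A' + ENNReal.ofReal c * volume A ≤ volume A' + volume (A \ A') := by
            gcongr
            refine le_trans ?_ key
            gcongr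
        _ = volume A := by
            have := measure_inter_add_sdiff (μ := volume) A hAO'.measurableSet
            rwa [inter_eq_self_of_subset_right hA'A] at this
    rw [← ENNReal.ofReal_toReal hfin, ← ENNReal.ofReal_toReal hfin'] at e1 ⊢
    rw [← ENNReal.ofReal_mul hc0.le, ← ENNReal.ofReal_add (by positivity) (by positivity),
      ENNReal.ofReal_le_ofReal_iff (by positivity)] at e1
    rw [← ENNReal.ofReal_mul (by linarith)]
    apply ENNReal.ofReal_le_ofReal
    linarith
  · intro x hx
    have hrx := hr0 x hx
    have hrx2 := hr2 x hx
    by_contra hcon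
    push Not at hcon
    have hdom : Metric.ball (y x) (16 * (r x / 4)) ⊆ Metric.ball z (9 * ρ) := by
      intro w hw
      rw [Metric.mem_ball] at hw ⊢
      have := dist_triangle w (y x) z
      have := hyz x hx
      linarith
    have := hcrit b f u (y x) (r x / 4) s (by positivity) hs0 (h.mono Metric.isOpen_ball hdom)
      (hb.mono_set hdom) ((hf.mono_set hdom).mono ?_) ?_
    · obtain ⟨p, hpS, hp⟩ := (Metric.infDist_lt_iff hSne (x := x) (r := 3 / 2 * r x)).1
        (by change r x < _; linarith)
      have h1 := this p (by
        rw [Metric.mem_ball]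
        have := dist_triangle_left p (y x) x
        have := hxy x hx
        linarith)
      exact absurd h1 (not_lt.2 hpS.2)
    · gcongr
      linarith
    · refine lt_of_le_of_lt (measure_mono ?_) hcon
      intro w hw
      have hwc := Metric.ball_subset_closedBall hw.1
      exact ⟨⟨hsubA x hx hwc, fun hw' => absurd hw'.2 (not_lt.2 hw.2)⟩, hwc⟩

end part8

section part9

/-! ## Interior weak Harnack (measure form) -/

open MeasureTheory Filter Topology Set
open scoped ENNReal

lemma weakLe (n : ℕ) (hn : 1 ≤ n) (lam Lam : ℝ) (hlam : 0 < lam) (hLam : lam ≤ Lam) :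
    ∃ ε0 δ C : ℝ, 0 < ε0 ∧ 0 < δ ∧ 0 < C ∧ ∀ (b f u : EuclideanSpace ℝ (Fin n) → ℝ)
      (z : EuclideanSpace ℝ (Fin n)) (ρ t : ℝ), 0 < ρ → 0 < t →
      SS n lam Lam b f u (Metric.ball z (9 * ρ)) →
      IntLe n b (Metric.ball z (9 * ρ)) δ →
      IntLe n f (Metric.ball z (9 * ρ)) (δ * t / ρ) →
      ∀ x1 ∈ Metric.ball z ρ, u x1 ≤ t →
      ∀ ε, 0 < ε → ε ≤ ε0 → ∫⁻ x in Metric.ball z ρ, ENNReal.ofReal (u x ^ ε) ≤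
        ENNReal.ofReal (C * t ^ ε) * volume (Metric.ball z ρ) := by
  obtain ⟨c, δ, M, hc0, hc1, hδ, hM, hink⟩ := ink n hn lam Lam hlam hLam
  have hlM : 0 < Real.log M := Real.log_pos hM
  have hlc : 0 < Real.log (1 + c) := Real.log_pos (by linarith)
  refine ⟨Real.log (1 + c) / Real.log M, δ, 1 + (1 + c) / c ^ 2, by positivity, hδ, by positivity, ?_⟩
  intro b f u z ρ t hρ ht h hb hf x1 hx1 hux1 ε hε hε0
  have hM0 : 0 < M := by linarith
  have hMε : M ^ ε ≤ 1 + c := by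
    rw [Real.rpow_def_of_pos hM0]
    calc Real.exp (Real.log M * ε) ≤ Real.exp (Real.log M * (Real.log (1 + c) / Real.log M)) := by
          gcongr
      _ = 1 + c := by
          rw [mul_div_cancel₀ _ hlM.ne', Real.exp_log (by linarith)]
  set B := Metric.ball z ρ with hB
  have hBsub : B ⊆ Metric.ball z (9 * ρ) := Metric.ball_subset_ball (by linarith)
  have huc : ContinuousOn u B := h.uc.continuousOn.mono hBsub
  set A : ℕ → Set (EuclideanSpace ℝ (Fin n)) := fun k => {x ∈ B | M ^ k * t < u x} with hA
  have hAO : ∀ k, MeasurableSet (A k) := fun k =>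
    (huc.isOpen_inter_preimage Metric.isOpen_ball isOpen_Ioi).measurableSet
  have hvol : ∀ k, volume (A k) ≤ ENNReal.ofReal (1 - c) ^ k * volume B := by
    intro k
    induction k with
    | zero => simpa using measure_mono (fun x hx => hx.1)
    | succ k ih =>
      have := hink b f u z ρ t hρ ht h hb hf x1 hx1 hux1 (M ^ k * t)
        (by have := one_le_pow₀ (n := k) hM.le; nlinarith)
      have e : A (k + 1) = {x ∈ Metric.ball z ρ | M * (M ^ k * t) < u x} := by
        simp only [hA, pow_succ]
        ext x
        simp only [mem_setOf_eq]
        rw [show M ^ k * M * t = M * (M ^ k * t) by ring]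
      rw [e]
      refine this.trans ?_
      rw [pow_succ', mul_assoc]
      gcongr
  have pt : ∀ x ∈ B, ENNReal.ofReal (u x ^ ε) ≤ ENNReal.ofReal (t ^ ε) *
      (1 + ∑' k : ℕ, (A k).indicator (fun _ => ENNReal.ofReal (1 + c) ^ (k + 1)) x) := by
    intro x hx
    have hux := h.u0 x (hBsub hx)
    have hex : ∃ k : ℕ, u x ≤ M ^ k * t := by
      obtain ⟨k, hk⟩ := pow_unbounded_of_one_lt (u x / t) hM
      exact ⟨k, by rw [div_lt_iff₀ ht] at hk; exact hk.le⟩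
    classical
    have hk := Nat.find_spec hex
    have hkm := fun m => Nat.find_min hex (m := m)
    rcases hfi : Nat.find hex with _ | j
    · rw [hfi] at hk
      refine le_trans ?_ (mul_le_mul_right le_self_add _)
      rw [mul_one]
      apply ENNReal.ofReal_le_ofReal
      apply Real.rpow_le_rpow hux (by simpa using hk) hε.le
    · rw [hfi] at hk
      have hj : M ^ j * t < u x := by
        have := hkm j (by omega)
        exact not_le.1 this
      have hxA : x ∈ A j := ⟨hx, hj⟩
      calc ENNReal.ofReal (u x ^ ε) ≤ ENNReal.ofReal (t ^ ε * (1 + c) ^ (j + 1)) := by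
            apply ENNReal.ofReal_le_ofReal
            calc u x ^ ε ≤ (M ^ (j + 1) * t) ^ ε := Real.rpow_le_rpow hux hk hε.le
              _ = t ^ ε * (M ^ ε) ^ (j + 1) := by
                rw [Real.mul_rpow (by positivity) ht.le, mul_comm, ← Real.rpow_natCast,
                  ← Real.rpow_natCast, ← Real.rpow_mul hM0.le, ← Real.rpow_mul hM0.le, mul_comm ε]
              _ ≤ t ^ ε * (1 + c) ^ (j + 1) := by gcongr
        _ = ENNReal.ofReal (t ^ ε) * (A j).indicator (fun _ => ENNReal.ofReal (1 + c) ^ (j + 1)) x := by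
            rw [indicator_of_mem hxA, ENNReal.ofReal_mul (by positivity),
              ENNReal.ofReal_pow (by linarith)]
        _ ≤ _ := by
            gcongr
            refine le_trans ?_ le_add_self
            exact ENNReal.le_tsum (f := fun k => (A k).indicator
              (fun _ => ENNReal.ofReal (1 + c) ^ (k + 1)) x) j
  have hmeas : ∀ k, Measurable ((A k).indicator
      (fun _ : EuclideanSpace ℝ (Fin n) => ENNReal.ofReal (1 + c) ^ (k + 1))) :=
    fun k => measurable_const.indicator (hAO k)
  calc ∫⁻ x in B, ENNReal.ofReal (u x ^ ε)
      ≤ ∫⁻ x in B, ENNReal.ofReal (t ^ ε) *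
      (1 + ∑' k : ℕ, (A k).indicator (fun _ => ENNReal.ofReal (1 + c) ^ (k + 1)) x) :=
        setLIntegral_mono' Metric.isOpen_ball.measurableSet pt
    _ = ENNReal.ofReal (t ^ ε) * (volume B +
          ∑' k : ℕ, ENNReal.ofReal (1 + c) ^ (k + 1) * volume (A k ∩ B)) := by
        rw [lintegral_const_mul' _ _ (by finiteness), lintegral_add_left measurable_const,
          lintegral_tsum (fun k => (hmeas k).aemeasurable)]
        congr 2
        · simp
        · congr 1
          ext k
          rw [lintegral_indicator_const (hAO k), Measure.restrict_apply (hAO k)]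
    _ ≤ ENNReal.ofReal (t ^ ε) * (volume B +
          ∑' k : ℕ, ENNReal.ofReal (1 + c) * volume B * ENNReal.ofReal (1 - c ^ 2) ^ k) := by
        refine mul_le_mul_right (add_le_add_right (ENNReal.tsum_le_tsum fun k => ?_) _) _
        calc ENNReal.ofReal (1 + c) ^ (k + 1) * volume (A k ∩ B)
            ≤ ENNReal.ofReal (1 + c) ^ (k + 1) * (ENNReal.ofReal (1 - c) ^ k * volume B) := by
              gcongr
              exact (measure_mono inter_subset_left).trans (hvol k)
          _ = ENNReal.ofReal (1 + c) * volume B * (ENNReal.ofReal (1 + c) *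
              ENNReal.ofReal (1 - c)) ^ k := by rw [pow_succ, mul_pow]; ring
          _ = _ := by
              rw [← ENNReal.ofReal_mul (by linarith), show (1 + c) * (1 - c) = 1 - c ^ 2 by ring]
    _ = ENNReal.ofReal ((1 + (1 + c) / c ^ 2) * t ^ ε) * volume B := by
        rw [ENNReal.tsum_mul_left, ENNReal.tsum_geometric]
        have hcc : c ^ 2 < 1 := by nlinarith
        have e : (1 - ENNReal.ofReal (1 - c ^ 2))⁻¹ = ENNReal.ofReal (1 / c ^ 2) := by
          rw [← ENNReal.ofReal_one, ← ENNReal.ofReal_sub _ (by linarith),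
            ← ENNReal.ofReal_inv_of_pos (by ring_nf; positivity)]
          congr 1
          ring
        rw [e, mul_comm _ (t ^ ε), ENNReal.ofReal_mul (by positivity),
          ENNReal.ofReal_add (p := 1) (q := (1 + c) / c ^ 2) (by norm_num) (by positivity), div_eq_mul_one_div (1 + c),
          ENNReal.ofReal_mul (by linarith)]
        rw [ENNReal.ofReal_one]
        ring

end part9

section part10

/-! ## Hoelder -/

open MeasureTheory Filter Topology Set
open scoped ENNReal

lemma holder_int {n : ℕ} (hn : 1 ≤ n) {q : ℝ} (hq : (n : ℝ) ≤ q)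
    {g : EuclideanSpace ℝ (Fin n) → ℝ} {D S : Set (EuclideanSpace ℝ (Fin n))} (hS : S ⊆ D)
    (hg : AEMeasurable g (volume.restrict S)) {K V : ℝ} (hK : 0 ≤ K) (hV : 0 ≤ V)
    (hL : LpNormE n q g D ≤ ENNReal.ofReal K) (hvol : volume S ≤ ENNReal.ofReal V) :
    IntLe n g S (K * V ^ (1 / (n : ℝ) - 1 / q)) := by
  have hn0 : (0 : ℝ) < n := by exact_mod_cast hn
  have hq0 : 0 < q := hn0.trans_le hq
  have hexp : 0 ≤ 1 / (n : ℝ) - 1 / q := by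
    rw [sub_nonneg]; exact one_div_le_one_div_of_le hn0 hq
  have h1 := eLpNorm'_le_eLpNorm'_mul_rpow_measure_univ (μ := volume.restrict S) (f := g) hn0 hq
    hg.aestronglyMeasurable
  have h2 : eLpNorm' g q (volume.restrict S) ≤ ENNReal.ofReal K := by
    refine le_trans ?_ hL
    unfold LpNormE eLpNorm'
    gcongr with x
    rw [Real.enorm_eq_ofReal_abs, ENNReal.ofReal_rpow_of_nonneg (abs_nonneg _) hq0.le]
  have h3 : eLpNorm' g n (volume.restrict S) ≤ ENNReal.ofReal (K * V ^ (1 / (n : ℝ) - 1 / q)) := by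
    refine h1.trans ?_
    rw [ENNReal.ofReal_mul hK, ← ENNReal.ofReal_rpow_of_nonneg hV hexp]
    rw [Measure.restrict_apply_univ]
    gcongr
  unfold IntLe
  calc ∫⁻ x in S, ENNReal.ofReal (g x) ^ n ≤ ∫⁻ x in S, ‖g x‖ₑ ^ (n : ℝ) := by
        refine lintegral_mono fun x => ?_
        rw [ENNReal.rpow_natCast, Real.enorm_eq_ofReal_abs]
        gcongr
        exact le_abs_self _
    _ = (eLpNorm' g n (volume.restrict S)) ^ n := by
        unfold eLpNorm'
        rw [← ENNReal.rpow_natCast, ← ENNReal.rpow_mul, one_div, inv_mul_cancel₀ hn0.ne',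
          ENNReal.rpow_one]
    _ ≤ _ := by gcongr

lemma holder_ball {n : ℕ} (hn : 1 ≤ n) {q : ℝ} (hq : (n : ℝ) ≤ q)
    {g : EuclideanSpace ℝ (Fin n) → ℝ} {D S : Set (EuclideanSpace ℝ (Fin n))} (hS : S ⊆ D)
    (hg : AEMeasurable g (volume.restrict S)) {K r : ℝ} (hK : 0 ≤ K) (hr : 0 ≤ r)
    {z : EuclideanSpace ℝ (Fin n)}
    (hL : LpNormE n q g D ≤ ENNReal.ofReal K) (hball : S ⊆ Metric.ball z r) :
    IntLe n g S (K * (omegaR n ^ (1 / (n : ℝ) - 1 / q) * r ^ (1 - n / q))) := by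
  have hn0 : (0 : ℝ) < n := by exact_mod_cast hn
  have hq0 : 0 < q := hn0.trans_le hq
  have := holder_int hn hq hS hg hK (V := r ^ n * omegaR n)
    (mul_nonneg (by positivity) (omegaR_pos n).le) hL
    (by rw [← vol_ball hn z hr]; exact measure_mono hball)
  convert this using 2
  rw [Real.mul_rpow (by positivity) (omegaR_pos n).le, mul_comm, ← Real.rpow_natCast,
    ← Real.rpow_mul hr]
  congr 2
  field_simp

end part10

section part11

/-! ## Harnack chains -/

open MeasureTheory Filter Topology Set
open scoped ENNReal

/-- upper half ball -/
def HB {n : ℕ} (k : Fin n) (R : ℝ) : Set (EuclideanSpace ℝ (Fin n)) := {x | ‖x‖ < R ∧ 0 < x k}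

/-- data of the problem in normalized form -/
structure Dat {n : ℕ} (k : Fin n) (lam Lam α Kb d0 F : ℝ)
    (b f u : EuclideanSpace ℝ (Fin n) → ℝ) : Prop where
  ss : SS n lam Lam b f u (HB k 2)
  F0 : 0 ≤ F
  hb : ∀ (S : Set (EuclideanSpace ℝ (Fin n))) (z : EuclideanSpace ℝ (Fin n)) (r : ℝ),
    S ⊆ HB k 2 → 0 ≤ r → S ⊆ Metric.ball z r → IntLe n b S (Kb * r ^ α)
  hf : ∀ S : Set (EuclideanSpace ℝ (Fin n)), S ⊆ HB k 2 → IntLe n f S F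
  hf2 : ∀ (S : Set (EuclideanSpace ℝ (Fin n))) (z : EuclideanSpace ℝ (Fin n)) (r : ℝ),
    S ⊆ HB k 2 → (∀ x ∈ S, x k < d0) → 0 ≤ r → S ⊆ Metric.ball z r → IntLe n f S (F * r ^ α)

lemma coord_le {n : ℕ} (k : Fin n) (x y : EuclideanSpace ℝ (Fin n)) : |x k - y k| ≤ dist x y := by
  rw [dist_eq_norm]
  exact PiLp.norm_apply_le (x - y) k

lemma exists_small {α Kb δ : ℝ} (hα : 0 < α) (hKb : 0 ≤ Kb) (hδ : 0 < δ) :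
    ∃ s : ℝ, 0 < s ∧ ∀ r, 0 ≤ r → r ≤ s → Kb * r ^ α ≤ δ := by
  refine ⟨(δ / (Kb + 1)) ^ (1 / α), by positivity, fun r hr hrs => ?_⟩
  have h1 : r ^ α ≤ δ / (Kb + 1) := by
    calc r ^ α ≤ ((δ / (Kb + 1)) ^ (1 / α)) ^ α := Real.rpow_le_rpow hr hrs hα.le
      _ = δ / (Kb + 1) := by
        rw [← Real.rpow_mul (by positivity), one_div, inv_mul_cancel₀ hα.ne', Real.rpow_one]
  calc Kb * r ^ α ≤ Kb * (δ / (Kb + 1)) := by gcongr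
    _ ≤ δ := by rw [← mul_div_assoc, div_le_iff₀ (by positivity)]; nlinarith

lemma ball_sub_HB {n : ℕ} {k : Fin n} {x : EuclideanSpace ℝ (Fin n)} {r : ℝ} (h1 : ‖x‖ + r ≤ 2)
    (h2 : r ≤ x k) : Metric.ball x r ⊆ HB k 2 := by
  intro y hy
  have h3 : dist y x < r := hy
  have h4 := (abs_le.1 (coord_le k y x)).1
  have h5 : ‖y‖ ≤ ‖y - x‖ + ‖x‖ := by simpa using norm_add_le (y - x) x
  rw [← dist_eq_norm] at h5
  exact ⟨by linarith, by linarith⟩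

lemma chain_step {n : ℕ} (k : Fin n) (lam Lam α Kb : ℝ) (hlam : 0 < lam) (hLam : lam ≤ Lam)
    (hα : 0 < α) (hKb : 0 ≤ Kb) (δ' : ℝ) (hδ' : 0 < δ') :
    ∃ κ c0 C : ℝ, 0 < κ ∧ κ ≤ 1 / 512 ∧ Kb * (128 * κ) ^ α ≤ δ' ∧ 0 < c0 ∧ c0 ≤ 1 / 2 ∧ 0 < C ∧
      ∀ (d0 F : ℝ) (b f u : EuclideanSpace ℝ (Fin n) → ℝ), Dat k lam Lam α Kb d0 F b f u →
      ∀ (x y : EuclideanSpace ℝ (Fin n)) (t : ℝ) (j : ℕ), ‖x‖ < 7 / 4 → 0 < x k → 0 ≤ t →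
      ‖y‖ < 7 / 4 → 0 < y k → dist y x ≤ κ * x k →
      (∀ w ∈ Metric.ball x (κ * x k), c0 ^ j * t - C * F ≤ u w) →
      ∀ w ∈ Metric.ball y (κ * y k), c0 ^ (j + 1) * t - C * F ≤ u w := by
  have hn : 1 ≤ n := by have := k.2; omega
  obtain ⟨c0, δ, C, hc0, hc01, hδ, hC, hd⟩ := doubling n hn lam Lam hlam hLam
  obtain ⟨s, hs, hsm⟩ := exists_small hα hKb (lt_min hδ hδ')
  refine ⟨min (1 / 512) (s / 128), c0, 2 * C, by positivity, min_le_left _ _, ?_, hc0, hc01,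
    by positivity, ?_⟩
  · refine (hsm _ (by positivity) ?_).trans (min_le_right _ _)
    have := min_le_right (1 / 512) (s / 128)
    linarith
  set κ := min (1 / 512) (s / 128) with hκ
  have hκ0 : 0 < κ := by positivity
  have hκ1 : κ ≤ 1 / 512 := min_le_left _ _
  have hκ2 : κ ≤ s / 128 := min_le_right _ _
  intro d0 F b f u D x y t j hx hxk ht hy hyk hxy hP w hw
  have hF := D.F0
  have hxk2 : x k ≤ 7 / 4 := by
    have : |x k| ≤ ‖x‖ := PiLp.norm_apply_le x k
    have := le_abs_self (x k)
    linarith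
  have hyk2 : y k ≤ 2 * x k := by
    have := (abs_le.1 (coord_le k y x)).2
    nlinarith
  have hκx : κ * x k ≤ 1 / 512 * x k := by gcongr
  have hdom : Metric.ball x (64 * κ * x k) ⊆ HB k 2 := ball_sub_HB (by linarith) (by linarith)
  have hwx : w ∈ Metric.ball x (64 * κ * x k / 2) := by
    rw [Metric.mem_ball] at hw ⊢
    have := dist_triangle w y x
    have : κ * y k ≤ κ * (2 * x k) := by gcongr
    have : 0 < κ * x k := by positivity
    linarith
  have hw0 : 0 ≤ u w := D.ss.u0 w (hdom (Metric.ball_subset_ball (by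
    have : 0 < κ * x k := by positivity
    linarith) hwx))
  rw [pow_succ]
  rcases le_total (c0 ^ j * t - 2 * C * F) 0 with h0 | h0
  · have : 0 ≤ c0 ^ j * t := by positivity
    nlinarith
  · have := hd b f u x (64 * κ * x k) (c0 ^ j * t - 2 * C * F) F (by positivity) h0 hF
      (D.ss.mono Metric.isOpen_ball hdom) ((D.hb _ x (64 * κ * x k) hdom (by positivity)
        Subset.rfl).mono ?_) (D.hf _ hdom) ?_ w hwx
    · have h1 : C * (64 * κ * x k) * F ≤ C * 1 * F := by gcongr; linarith
      have h2 : c0 * (2 * C * F) ≤ 1 / 2 * (2 * C * F) := by gcongr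
      nlinarith
    · refine (hsm _ (by positivity) ?_).trans (min_le_left _ _)
      nlinarith
    · intro v hv
      apply hP v
      convert hv using 2
      ring

end part11

section part12

open MeasureTheory Filter Topology Set
open scoped ENNReal

lemma chain {n : ℕ} (k : Fin n) (lam Lam α Kb : ℝ) (hlam : 0 < lam) (hLam : lam ≤ Lam)
    (hα : 0 < α) (hKb : 0 ≤ Kb) (δ' : ℝ) (hδ' : 0 < δ') :
    ∃ (κ C : ℝ) (m : ℕ), 0 < κ ∧ κ ≤ 1 / 512 ∧ Kb * (128 * κ) ^ α ≤ δ' ∧ 0 < C ∧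
      ∀ h1 : ℝ, 0 < h1 → h1 ≤ 1 / 8 → ∃ c : ℝ, 0 < c ∧
      ∀ (d0 F : ℝ) (b f u : EuclideanSpace ℝ (Fin n) → ℝ), Dat k lam Lam α Kb d0 F b f u →
      ∀ (x : EuclideanSpace ℝ (Fin n)) (t : ℝ), ‖x‖ < 3 / 2 → 0 < x k → 0 ≤ t →
      (∀ w ∈ Metric.ball x (κ * x k), t ≤ u w) →
      ∀ y : EuclideanSpace ℝ (Fin n), ‖y‖ < 7 / 4 → h1 ≤ y k →
      c * (x k) ^ m * t - C * F ≤ u y := by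
  obtain ⟨κ, c0, C, hκ0, hκ1, hκδ, hc0, hc01, hC, hstep⟩ :=
    chain_step k lam Lam α Kb hlam hLam hα hKb δ' hδ'
  have hq : (1 + κ)⁻¹ < 1 := inv_lt_one_of_one_lt₀ (by linarith)
  obtain ⟨m, hm⟩ := exists_pow_lt_of_lt_one hc0 hq
  refine ⟨κ, C, m, hκ0, hκ1, hκδ, hC, ?_⟩
  intro h1 hh1 hh18
  obtain ⟨N, hN⟩ := exists_nat_ge (4 / (κ * h1))
  have hN0 : (0 : ℝ) < N := lt_of_lt_of_le (by positivity) hN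
  have hN4 : 4 / N ≤ κ * h1 := by
    rw [div_le_iff₀ (by positivity)] at hN ⊢
    linarith
  refine ⟨c0 ^ N / 2 ^ m, by positivity, ?_⟩
  intro d0 F b f u D x t hx hxk ht hu y hy hyk
  have hst := hstep d0 F b f u D
  have hF := D.F0
  set X : ℕ → EuclideanSpace ℝ (Fin n) := fun i =>
    x + (((1 + κ) ^ i - 1) * x k) • EuclideanSpace.single k (1 : ℝ) with hX
  have hXk : ∀ i, X i k = (1 + κ) ^ i * x k := by
    intro i; simp [hX]; ring
  have h1k : ∀ i, 1 ≤ (1 + κ) ^ i := fun i => one_le_pow₀ (by linarith)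
  have hXn : ∀ i, ‖X i‖ ≤ ‖x‖ + ((1 + κ) ^ i - 1) * x k := by
    intro i
    refine (norm_add_le _ _).trans ?_
    have := h1k i
    rw [norm_smul, EuclideanSpace.norm_single, Real.norm_of_nonneg
      (mul_nonneg (by linarith) hxk.le)]
    simp
  have hex : ∃ j : ℕ, 1 / 8 ≤ (1 + κ) ^ j * x k := by
    obtain ⟨j, hj⟩ := pow_unbounded_of_one_lt (1 / 8 / x k) (by linarith : 1 < 1 + κ)
    exact ⟨j, by rw [div_lt_iff₀ hxk] at hj; exact hj.le⟩
  classical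
  obtain ⟨J, hJ, hJmin⟩ : ∃ J : ℕ, 1 / 8 ≤ (1 + κ) ^ J * x k ∧
      ∀ i < J, (1 + κ) ^ i * x k < 1 / 8 :=
    ⟨Nat.find hex, Nat.find_spec hex, fun i hi => not_le.1 (Nat.find_min hex hi)⟩
  have hXn2 : ∀ i ≤ J, ‖X i‖ < 7 / 4 := by
    intro i hi
    have h2 := hXn i
    rcases i with _ | i
    · simp at h2; simp; linarith
    · have h3 := hJmin i (by omega)
      rw [pow_succ] at h2
      have : 0 < (1 + κ) ^ i * x k := by have := h1k i; positivity
      nlinarith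
  have hP1 : ∀ i ≤ J, ∀ w ∈ Metric.ball (X i) (κ * X i k), c0 ^ i * t - C * F ≤ u w := by
    intro i
    induction i with
    | zero =>
      intro _ w hw
      have e : X 0 = x := by simp [hX]
      rw [e] at hw
      have := hu w hw
      have : 0 ≤ C * F := by positivity
      simp; linarith
    | succ i ih =>
      intro hi
      apply hst (X i) (X (i + 1)) t i (hXn2 i (by omega)) (by rw [hXk]; have := h1k i; positivity)
        ht (hXn2 _ hi) (by rw [hXk]; have := h1k (i + 1); positivity) ?_ (ih (by omega))
      rw [dist_eq_norm, hXk]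
      have e : X (i + 1) - X i = (κ * ((1 + κ) ^ i * x k)) • EuclideanSpace.single k (1 : ℝ) := by
        simp only [hX, pow_succ]
        module
      rw [e, norm_smul, EuclideanSpace.norm_single, Real.norm_of_nonneg (by positivity)]
      simp
  have hXJ := hXn2 J le_rfl
  set Y : ℕ → EuclideanSpace ℝ (Fin n) := fun i => X J + ((i : ℝ) / N) • (y - X J) with hY
  have hYn : ∀ i ≤ N, ‖Y i‖ < 7 / 4 := by
    intro i hi
    have hc := (convex_ball (0 : EuclideanSpace ℝ (Fin n)) (7 / 4)).add_smul_sub_mem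
      (x := X J) (y := y) (by simpa using hXJ) (by simpa using hy) (t := (i : ℝ) / N)
      ⟨by positivity, by rw [div_le_one hN0]; exact_mod_cast hi⟩
    simpa using hc
  have hYk : ∀ i ≤ N, h1 ≤ Y i k := by
    intro i hi
    have e : Y i k = X J k + (i : ℝ) / N * (y k - X J k) := by simp [hY]
    have h2 : h1 ≤ X J k := by rw [hXk]; linarith
    have h3 : (i : ℝ) / N ≤ 1 := by rw [div_le_one hN0]; exact_mod_cast hi
    have h4 : 0 ≤ (i : ℝ) / N := by positivity
    rw [e]
    nlinarith
  have hP2 : ∀ i ≤ N, ∀ w ∈ Metric.ball (Y i) (κ * Y i k), c0 ^ (J + i) * t - C * F ≤ u w := by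
    intro i
    induction i with
    | zero =>
      intro _ w hw
      have e : Y 0 = X J := by simp [hY]
      rw [e] at hw
      exact hP1 J le_rfl w hw
    | succ i ih =>
      intro hi
      have hk1 := hYk i (by omega)
      have hk2 := hYk _ hi
      apply hst (Y i) (Y (i + 1)) t (J + i) (hYn i (by omega)) (by linarith)
        ht (hYn _ hi) (by linarith) ?_ (ih (by omega))
      have e : Y (i + 1) - Y i = (1 / (N : ℝ)) • (y - X J) := by
        simp only [hY]
        push_cast
        module
      rw [dist_eq_norm, e, norm_smul, Real.norm_of_nonneg (by positivity)]
      have h5 : ‖y - X J‖ ≤ 4 := (norm_sub_le _ _).trans (by linarith)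
      calc 1 / (N : ℝ) * ‖y - X J‖ ≤ 1 / (N : ℝ) * 4 := by gcongr
        _ = 4 / N := by ring
        _ ≤ κ * h1 := hN4
        _ ≤ κ * Y i k := by gcongr
  have hYN : Y N = y := by
    simp only [hY]
    rw [div_self hN0.ne']; simp
  have fin := hP2 N le_rfl y (by rw [hYN]; exact Metric.mem_ball_self (by nlinarith))
  have hcJ : (x k / 2) ^ m ≤ c0 ^ J := by
    have hx2 : x k ≤ 2 := by
      have : |x k| ≤ ‖x‖ := PiLp.norm_apply_le x k
      have := le_abs_self (x k)
      linarith
    rcases Nat.eq_zero_or_pos J with h0 | h0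
    · rw [h0, pow_zero]
      exact pow_le_one₀ (by positivity) (by linarith)
    · obtain ⟨J', rfl⟩ : ∃ J', J = J' + 1 := ⟨J - 1, by omega⟩
      have h3 := hJmin J' (by omega)
      have h4 : x k / 2 ≤ ((1 + κ)⁻¹) ^ (J' + 1) := by
        rw [inv_pow, ← one_div, le_div_iff₀ (by positivity), pow_succ]
        have : 0 < (1 + κ) ^ J' * x k := by have := h1k J'; positivity
        nlinarith
      calc (x k / 2) ^ m ≤ (((1 + κ)⁻¹) ^ (J' + 1)) ^ m := by gcongr
        _ = (((1 + κ)⁻¹) ^ m) ^ (J' + 1) := by rw [← pow_mul, ← pow_mul, mul_comm]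
        _ ≤ c0 ^ (J' + 1) := by gcongr
  have : c0 ^ N / 2 ^ m * x k ^ m * t ≤ c0 ^ (J + N) * t := by
    calc c0 ^ N / 2 ^ m * x k ^ m * t = (x k / 2) ^ m * c0 ^ N * t := by rw [div_pow]; ring
      _ ≤ c0 ^ J * c0 ^ N * t := by gcongr
      _ = c0 ^ (J + N) * t := by rw [pow_add]
  linarith

end part12

section part13

open MeasureTheory Filter Topology Set
open scoped ENNReal

/-- truncated cylinder-like domain -/
def TD {n : ℕ} (k : Fin n) (z : EuclideanSpace ℝ (Fin n)) (ρ H : ℝ) :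
    Set (EuclideanSpace ℝ (Fin n)) := {y | ‖y - z‖ < ρ ∧ 0 < y k ∧ y k < H}

def QB {n : ℕ} (k : Fin n) (lam Lam κ0 : ℝ) : Prop :=
  ∀ (b f u ψ : EuclideanSpace ℝ (Fin n) → ℝ) (z : EuclideanSpace ℝ (Fin n))
    (P c1 c2 ρ H β γ L : ℝ), SS n lam Lam b f u (TD k z ρ H) → 0 < ρ → 0 ≤ P → 0 ≤ c2 →
    P * (Lam * n) ≤ c2 * lam → 0 ≤ β → 0 ≤ γ → 0 ≤ L → IntLe n b (TD k z ρ H) β →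
    IntLe n f (TD k z ρ H) γ →
    β ≤ κ0 → Continuous ψ → (∀ y ∈ TD k z ρ H, ψ y ≤ u y) →
    (∀ y, ‖y - z‖ ≤ ρ → 0 ≤ y k → y k ≤ H → y ∉ TD k z ρ H →
      -P * ‖y - z‖ ^ 2 + (c1 * y k + c2 * (y k) ^ 2) ≤ max 0 (ψ y)) →
    (∀ y ∈ TD k z ρ H, 2 * P * ρ + |c1 + 2 * c2 * y k| ≤ L) →
    ∀ y ∈ TD k z ρ H, -P * ‖y - z‖ ^ 2 + (c1 * y k + c2 * (y k) ^ 2) ≤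
      u y + 2 * ρ * (γ + L * β) / κ0

lemma quad_barrier {n : ℕ} (k : Fin n) (lam Lam : ℝ) (hlam : 0 < lam) :
    ∃ κ0 : ℝ, 0 < κ0 ∧ QB k lam Lam κ0 := by
  have hn : 1 ≤ n := by have := k.2; omega
  obtain ⟨κ0, hκ0, habp⟩ := abp n hn lam Lam hlam
  refine ⟨κ0, hκ0, ?_⟩
  intro b f u ψ z P c1 c2 ρ H β γ L h hρ hP hc2 hPc hβ hγ hL hb hf hβκ hψ hψu hbd hLb
  set F : ℝ → ℝ := fun s => -P * s with hF
  have hd1 : ∀ s, HasDerivAt F ((fun _ => -P) s) s := by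
    intro s
    simpa [hF] using (hasDerivAt_id s).const_mul (-P)
  have hd2 : ∀ s, HasDerivAt (fun _ : ℝ => -P) ((fun _ => 0) s) s := fun s => hasDerivAt_const s _
  have hFc : ContDiff ℝ 2 F := by simp only [hF]; fun_prop
  set φ : EuclideanSpace ℝ (Fin n) → ℝ := fun y => F (‖y - z‖ ^ 2) + (c1 * y k + c2 * (y k) ^ 2)
    with hφ
  have hφc : ContDiff ℝ 2 φ := barrier_contDiff z k c1 c2 hFc
  have hkc : Continuous (fun y : EuclideanSpace ℝ (Fin n) => y k) :=
    (EuclideanSpace.proj k : EuclideanSpace ℝ (Fin n) →L[ℝ] ℝ).continuous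
  refine habp b f u φ (TD k z ρ H) (2 * ρ) β γ L h hφc.contDiffOn (by positivity) ?_ hβ hγ hL hb hf
    hβκ ?_ ?_
  · intro x hx y hy
    rw [← dist_eq_norm]
    have := dist_triangle_right x y z
    have h1 := hx.1
    have h2 := hy.1
    rw [← dist_eq_norm] at h1 h2
    linarith
  · intro η hη
    refine ⟨Metric.closedBall z ρ ∩ ({y | 0 ≤ y k} ∩ ({y | y k ≤ H} ∩
      {y | η ≤ φ y - max 0 (ψ y)})), ?_, ?_, ?_⟩
    · refine (isCompact_closedBall z ρ).inter_right ?_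
      refine (isClosed_le continuous_const hkc).inter ((isClosed_le hkc continuous_const).inter ?_)
      exact isClosed_le continuous_const (hφc.continuous.sub (continuous_const.max hψ))
    · rintro y ⟨hy1, hy2, hy3, hy4⟩
      by_contra hc
      have h1 := hbd y (by simpa [dist_eq_norm] using hy1) hy2 hy3 hc
      have h2 : η ≤ φ y - max 0 (ψ y) := hy4
      have h3 : φ y ≤ max 0 (ψ y) := h1
      linarith
    · intro y hy hyK
      have h1 : φ y - max 0 (ψ y) < η := by
        by_contra hc
        refine hyK ⟨?_, hy.2.1.le, hy.2.2.le, not_lt.1 hc⟩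
        rw [Metric.mem_closedBall, dist_eq_norm]; exact hy.1.le
      have h2 : max 0 (ψ y) ≤ u y := max_le (h.u0 y hy) (hψu y hy)
      linarith
  · intro y hy _
    constructor
    · refine (barrier_norm z k c1 c2 hd1 y).trans (le_trans ?_ (hLb y hy))
      simp only [abs_neg, abs_of_nonneg hP]
      have := hy.1.le
      gcongr
    · apply barrier_sub z k c1 c2 hd1 hd2 y
      · simpa using hP
      · exact le_rfl
      · exact hc2
      · linarith

/-- projection to the flat boundary -/
noncomputable def flat {n : ℕ} (k : Fin n) (x : EuclideanSpace ℝ (Fin n)) :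
    EuclideanSpace ℝ (Fin n) := x - (x k) • EuclideanSpace.single k (1 : ℝ)

lemma flat_k {n : ℕ} (k : Fin n) (x : EuclideanSpace ℝ (Fin n)) : flat k x k = 0 := by
  simp [flat]

lemma flat_dist {n : ℕ} (k : Fin n) (x : EuclideanSpace ℝ (Fin n)) (hx : 0 ≤ x k) :
    ‖x - flat k x‖ = x k := by
  simp [flat, norm_smul, abs_of_nonneg hx]

lemma flat_le {n : ℕ} (k : Fin n) (x z : EuclideanSpace ℝ (Fin n)) (hz : z k = 0) :
    ‖flat k x - z‖ ≤ ‖x - z‖ := by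
  rw [EuclideanSpace.norm_eq, EuclideanSpace.norm_eq]
  apply Real.sqrt_le_sqrt
  apply Finset.sum_le_sum
  intro i _
  by_cases hi : i = k
  · subst hi
    simp [flat, hz]
    positivity
  · simp [flat, hi]

lemma norm_sub_k {n : ℕ} (k : Fin n) (x z : EuclideanSpace ℝ (Fin n)) (hz : z k = 0) :
    x k ≤ ‖x - z‖ := by
  have := (abs_le.1 (coord_le k x z)).2
  rw [hz, dist_eq_norm] at this
  linarith

lemma hopf_init {n : ℕ} {k : Fin n} {lam Lam α Kb κ0 d0 F : ℝ} (hlam : 0 < lam) (hLam : lam ≤ Lam)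
    (hKb : 0 ≤ Kb) (hQ : QB k lam Lam κ0)
    {b f u : EuclideanSpace ℝ (Fin n) → ℝ} (D : Dat k lam Lam α Kb d0 F b f u) {ρ H T : ℝ}
    (hH : 0 < H) (hρ : 0 < ρ) (hρ4 : ρ ≤ 1 / 4) (hHd : H ≤ d0) (hH1 : H ^ 2 * (2 * (Lam * n)) ≤ lam * ρ ^ 2)
    (hH2 : 2 * H ^ 2 ≤ ρ ^ 2) (hκ : Kb * ρ ^ α ≤ κ0) (hT : 0 ≤ T)
    (hu : ∀ y : EuclideanSpace ℝ (Fin n), ‖y‖ < 7 / 4 → H / 2 ≤ y k → T ≤ u y)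
    (x : EuclideanSpace ℝ (Fin n)) (hx : ‖flat k x‖ ≤ 5 / 4) (hxk : 0 < x k) (hxH : x k < H) :
    T / (2 * H) * x k - 2 * ρ * (F * ρ ^ α + (4 * T / H) * (Kb * ρ ^ α)) / κ0 ≤ u x := by
  have hHρ : H ≤ ρ := by nlinarith
  have hF := D.F0
  set z := flat k x with hz
  have hzk : z k = 0 := flat_k k x
  have hsub : TD k z ρ H ⊆ HB k 2 := by
    intro y hy
    have h5 : ‖y‖ ≤ ‖y - z‖ + ‖z‖ := by simpa using norm_add_le (y - z) z
    have := hy.1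
    exact ⟨by linarith, hy.2.1⟩
  have hsb : TD k z ρ H ⊆ Metric.ball z ρ := by
    intro y hy; rw [mem_ball_iff_norm]; exact hy.1
  have hkc : Continuous (fun y : EuclideanSpace ℝ (Fin n) => y k) :=
    (EuclideanSpace.proj k : EuclideanSpace ℝ (Fin n) →L[ℝ] ℝ).continuous
  have hTDo : IsOpen (TD k z ρ H) := by
    refine (isOpen_lt ((continuous_id.sub continuous_const).norm) continuous_const).inter
      ((isOpen_lt continuous_const hkc).inter (isOpen_lt hkc continuous_const))
  have hxT : x ∈ TD k z ρ H := ⟨by rw [flat_dist k x hxk.le]; linarith, hxk, hxH⟩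
  have key := hQ b f u (fun y => T * (2 * y k / H - 1)) z (T / ρ ^ 2) (T / (2 * H))
    (T / (2 * H ^ 2)) ρ H (Kb * ρ ^ α) (F * ρ ^ α) (4 * T / H) (D.ss.mono hTDo hsub) hρ
    (by positivity) (by positivity) ?_ (by positivity) (by positivity) (by positivity)
    (D.hb _ z ρ hsub hρ.le hsb) (D.hf2 _ z ρ hsub (fun y hy => hy.2.2.trans_le hHd) hρ.le hsb) hκ
    ?_ ?_ ?_ ?_ x hxT
  · rw [flat_dist k x hxk.le] at key
    have h1 : T / ρ ^ 2 ≤ T / (2 * H ^ 2) := by gcongr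
    have h2 := mul_le_mul_of_nonneg_right h1 (sq_nonneg (x k))
    linarith
  · rw [div_mul_eq_mul_div, div_mul_eq_mul_div, div_le_div_iff₀ (by positivity) (by positivity)]
    have := mul_le_mul_of_nonneg_left hH1 hT
    linarith
  · fun_prop
  · intro y hy
    by_cases hyH : H / 2 ≤ y k
    · have h5 : ‖y‖ ≤ ‖y - z‖ + ‖z‖ := by simpa using norm_add_le (y - z) z
      have h1 := hu y (by have := hy.1; linarith) hyH
      have h2 : 2 * y k / H - 1 ≤ 1 := by
        have : 2 * y k / H ≤ 2 := by rw [div_le_iff₀ hH]; linarith [hy.2.2]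
        linarith
      have := mul_le_mul_of_nonneg_left h2 hT
      simp only
      linarith
    · have h2 : 2 * y k / H - 1 ≤ 0 := by
        have : 2 * y k / H ≤ 1 := by rw [div_le_iff₀ hH]; linarith
        linarith
      exact (mul_nonpos_of_nonneg_of_nonpos hT h2).trans (D.ss.u0 y (hsub hy))
  · intro y hy1 hy2 hy3 hyn
    have e : -(T / ρ ^ 2) * ‖y - z‖ ^ 2 + (T / (2 * H) * y k + T / (2 * H ^ 2) * y k ^ 2)
      = T * ((y k / H) / 2 + (y k / H) ^ 2 / 2 - (‖y - z‖ / ρ) ^ 2) := by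
      field_simp; ring
    rw [e]
    have hs0 : 0 ≤ y k / H := by positivity
    have hs1 : y k / H ≤ 1 := by rw [div_le_one hH]; exact hy3
    by_cases hc : ‖y - z‖ < ρ
    · by_cases hc2 : 0 < y k
      · have : y k = H := by
          by_contra hc3
          exact hyn ⟨hc, hc2, lt_of_le_of_ne hy3 hc3⟩
        apply le_max_of_le_right
        rw [this, mul_div_assoc, div_self hH.ne']
        apply mul_le_mul_of_nonneg_left _ hT
        nlinarith [sq_nonneg (‖y - z‖ / ρ)]
      · have : y k = 0 := le_antisymm (not_lt.1 hc2) hy2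
        apply le_max_of_le_left
        rw [this]
        apply mul_nonpos_of_nonneg_of_nonpos hT
        simp
        positivity
    · have : ‖y - z‖ = ρ := le_antisymm hy1 (not_lt.1 hc)
      apply le_max_of_le_left
      rw [this, div_self hρ.ne']
      apply mul_nonpos_of_nonneg_of_nonpos hT
      nlinarith
  · intro y hy
    rw [abs_of_nonneg (by have := hy.2.1; positivity)]
    have h1 : 2 * (T / ρ ^ 2) * ρ = 2 * (T / ρ) := by field_simp
    have h2 : T / ρ ≤ T / H := by gcongr
    have h3 : 2 * (T / (2 * H ^ 2)) * y k ≤ T / H := by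
      have e : T / H = 2 * (T / (2 * H ^ 2)) * H := by field_simp
      rw [e]
      have := hy.2.2.le
      gcongr
    have h4 : T / (2 * H) = T / H / 2 := by field_simp
    have h5 : 4 * T / H = 4 * (T / H) := by ring
    have h6 : 0 ≤ T / H := by positivity
    linarith

lemma hopf_step {n : ℕ} {k : Fin n} {lam Lam α Kb κ0 d0 F B : ℝ} (hlam : 0 < lam) (hLam : lam ≤ Lam)
    (hB0 : 0 ≤ B) (hB : Lam * n ≤ B * lam)
    (hKb : 0 ≤ Kb) (hQ : QB k lam Lam κ0)
    {b f u : EuclideanSpace ℝ (Fin n) → ℝ} (D : Dat k lam Lam α Kb d0 F b f u) {r a θ : ℝ}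
    (hr : 0 < r) (hr4 : r ≤ 1 / 4) (hrd : r ≤ d0) (hκ : Kb * r ^ α ≤ κ0) (ha : 0 ≤ a)
    (hθ : 0 ≤ θ) (z0 : EuclideanSpace ℝ (Fin n)) (hz0 : z0 k = 0) (hz01 : ‖z0‖ ≤ 5 / 4)
    (hu : ∀ y : EuclideanSpace ℝ (Fin n), ‖y - z0‖ < r → 0 < y k → a * y k - θ * r ≤ u y)
    (x : EuclideanSpace ℝ (Fin n)) (hx : ‖x - z0‖ < r / 2) (hxk : 0 < x k) :
    (a - 2 * (1 + B) * θ) * x k -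
      (2 / κ0) * (F * r ^ α + (a + 2 * (2 + B) * θ) * (Kb * r ^ α)) * (r / 2) ≤ u x := by
  have hF := D.F0
  set z := flat k x with hz
  have hzk : z k = 0 := flat_k k x
  have hzz : ‖z - z0‖ < r / 2 := (flat_le k x z0 hz0).trans_lt hx
  have hxr : x k < r / 2 := (norm_sub_k k x z0 hz0).trans_lt hx
  have hsb : TD k z (r / 2) r ⊆ Metric.ball z0 r := by
    intro y hy; rw [mem_ball_iff_norm]
    have h5 : ‖y - z0‖ ≤ ‖y - z‖ + ‖z - z0‖ := by simpa using norm_add_le (y - z) (z - z0)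
    have := hy.1
    linarith
  have hsub : TD k z (r / 2) r ⊆ HB k 2 := by
    intro y hy
    have h5 : ‖y‖ ≤ ‖y - z0‖ + ‖z0‖ := by simpa using norm_add_le (y - z0) z0
    have := hsb hy
    rw [mem_ball_iff_norm] at this
    exact ⟨by linarith, hy.2.1⟩
  have hkc : Continuous (fun y : EuclideanSpace ℝ (Fin n) => y k) :=
    (EuclideanSpace.proj k : EuclideanSpace ℝ (Fin n) →L[ℝ] ℝ).continuous
  have hTDo : IsOpen (TD k z (r / 2) r) := by
    refine (isOpen_lt ((continuous_id.sub continuous_const).norm) continuous_const).inter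
      ((isOpen_lt continuous_const hkc).inter (isOpen_lt hkc continuous_const))
  have hxT : x ∈ TD k z (r / 2) r := ⟨by rw [flat_dist k x hxk.le]; linarith, hxk, by linarith⟩
  have key := hQ b f u (fun y => a * y k - θ * r) z (4 * θ / r) (a - 2 * θ * B)
    (4 * θ * B / r) (r / 2) r (Kb * r ^ α) (F * r ^ α) (a + 2 * (2 + B) * θ)
    (D.ss.mono hTDo hsub) (by positivity)
    (by positivity) (by positivity) ?_ (by positivity) (by positivity) (by positivity)
    (D.hb _ z0 r hsub hr.le hsb) (D.hf2 _ z0 r hsub (fun y hy => hy.2.2.trans_le hrd) hr.le hsb) hκ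
    ?_ ?_ ?_ ?_ x hxT
  · rw [flat_dist k x hxk.le] at key
    have h1 : 4 * θ / r * x k ^ 2 ≤ 2 * θ * x k := by
      have e : 2 * θ * x k = 4 * θ / r * (x k * (r / 2)) := by field_simp; ring
      rw [e, sq]
      gcongr
    have h2 : 0 ≤ 4 * θ * B / r * x k ^ 2 := by positivity
    have e : (2 / κ0) * (F * r ^ α + (a + 2 * (2 + B) * θ) * (Kb * r ^ α)) * (r / 2) =
      2 * (r / 2) * (F * r ^ α + (a + 2 * (2 + B) * θ) * (Kb * r ^ α)) / κ0 := by ring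
    rw [e]
    linarith
  · have e : 4 * θ * B / r * lam = 4 * θ / r * (B * lam) := by ring
    rw [e]
    gcongr
  · fun_prop
  · intro y hy
    refine hu y ?_ hy.2.1
    have := hsb hy
    rwa [mem_ball_iff_norm] at this
  · intro y hy1 hy2 hy3 hyn
    have hyk := norm_sub_k k y z hzk
    have e : -(4 * θ / r) * ‖y - z‖ ^ 2 + ((a - 2 * θ * B) * y k + 4 * θ * B / r * y k ^ 2)
      = a * y k - θ * r * (2 * ‖y - z‖ / r) ^ 2
        - θ * B * r * (2 * y k / r) * (1 - 2 * y k / r) := by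
      field_simp; ring
    have hs0 : 0 ≤ 2 * y k / r := by positivity
    have hs1 : 2 * y k / r ≤ 1 := by rw [div_le_one hr]; linarith
    by_cases hc : ‖y - z‖ < r / 2
    · have hyk0 : y k = 0 := by
        by_contra hc3
        exact hyn ⟨hc, lt_of_le_of_ne hy2 (Ne.symm hc3), by linarith⟩
      apply le_max_of_le_left
      rw [hyk0]
      have : 0 ≤ 4 * θ / r * ‖y - z‖ ^ 2 := by positivity
      linarith
    · have hyz : ‖y - z‖ = r / 2 := le_antisymm hy1 (not_lt.1 hc)
      apply le_max_of_le_right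
      rw [e, hyz]
      have h2 : (2 * (r / 2) / r) = 1 := by field_simp
      rw [h2]
      have : 0 ≤ θ * B * r * (2 * y k / r) * (1 - 2 * y k / r) := by
        have : 0 ≤ 1 - 2 * y k / r := by linarith
        positivity
      linarith
  · intro y hy
    have hyk := norm_sub_k k y z hzk
    have hy1 := hy.1
    have hy2 := hy.2.1
    have h1 : 2 * (4 * θ / r) * (r / 2) = 4 * θ := by field_simp
    have h2 : 0 ≤ 2 * (4 * θ * B / r) * y k := by positivity
    have h3 : 2 * (4 * θ * B / r) * y k ≤ 4 * θ * B := by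
      have e : 2 * (4 * θ * B / r) * (r / 2) = 4 * θ * B := by field_simp
      refine le_trans ?_ e.le
      have : y k ≤ r / 2 := by linarith
      gcongr
    have h4 : 0 ≤ θ * B := by positivity
    have : |a - 2 * θ * B + 2 * (4 * θ * B / r) * y k| ≤ a + 2 * θ * B := by
      rw [abs_le]; constructor <;> linarith
    linarith

end part13

section part14

open MeasureTheory Filter Topology Set
open scoped ENNReal

lemma hopf_iter {n : ℕ} {k : Fin n} {lam Lam α Kb κ0 d0 F B : ℝ} (hlam : 0 < lam) (hLam : lam ≤ Lam)
    (hα : 0 < α) (hα1 : α ≤ 1) (hκ0 : 0 < κ0)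
    (hB0 : 0 ≤ B) (hB : Lam * n ≤ B * lam)
    (hKb : 0 ≤ Kb) (hQ : QB k lam Lam κ0)
    {b f u : EuclideanSpace ℝ (Fin n) → ℝ} (D : Dat k lam Lam α Kb d0 F b f u) {r0 A σ q : ℝ}
    (hr0 : 0 < r0) (hr4 : r0 ≤ 1 / 4) (hrd : r0 ≤ d0) (hA : 0 ≤ A) (hσ : 0 < σ) (hσ8 : σ ≤ 1 / 8)
    (hq : q = (1 / 2 : ℝ) ^ α) (hσq : 4 * (1 + B) * σ ≤ 1 - q)
    (h1 : Kb * r0 ^ α ≤ κ0) (h2 : (4 / κ0) * (1 + 2 * (2 + B) * σ) * (Kb * r0 ^ α) ≤ σ / 2)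
    (h3 : (4 / κ0) * F ≤ σ * A / 2)
    (z0 : EuclideanSpace ℝ (Fin n)) (hz0 : z0 k = 0) (hz01 : ‖z0‖ ≤ 5 / 4)
    (hu : ∀ y : EuclideanSpace ℝ (Fin n), ‖y - z0‖ < r0 → 0 < y k → A * y k - σ * A * r0 ≤ u y)
    (m : ℕ) : ∀ y : EuclideanSpace ℝ (Fin n), ‖y - z0‖ < r0 * (1 / 2) ^ m → 0 < y k →
      A / 2 * y k - σ * A * (r0 * (1 / 2) ^ m) ≤ u y := by
  have hF := D.F0
  have hq0 : 0 < q := by rw [hq]; positivity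
  have hq1 : q < 1 := by rw [hq]; exact Real.rpow_lt_one (by norm_num) (by norm_num) hα
  have hq2 : 1 / 2 ≤ q := by
    rw [hq]
    calc (1 / 2 : ℝ) = (1 / 2 : ℝ) ^ (1 : ℝ) := by rw [Real.rpow_one]
      _ ≤ _ := Real.rpow_le_rpow_of_exponent_ge (by norm_num) (by norm_num) hα1
  set S : ℕ → ℝ := fun m => ∑ j ∈ Finset.range m, q ^ j with hS
  have hS0 : ∀ m, 0 ≤ S m := fun m => Finset.sum_nonneg fun j _ => by positivity
  have hS1 : ∀ m, S m * (1 - q) ≤ 1 := by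
    intro m
    have := geom_sum_mul_neg q m
    simp only [hS]
    rw [this]
    have : 0 < q ^ m := by positivity
    linarith
  have hS2 : ∀ m, 2 * (1 + B) * σ * S m ≤ 1 / 2 := by
    intro m
    have := mul_le_mul_of_nonneg_right hσq (hS0 m)
    have := hS1 m
    linarith
  have main : ∀ m : ℕ, ∀ y : EuclideanSpace ℝ (Fin n), ‖y - z0‖ < r0 * (1 / 2) ^ m → 0 < y k →
      A * (1 - 2 * (1 + B) * σ * S m) * y k - σ * A * q ^ m * (r0 * (1 / 2) ^ m) ≤ u y := by
    intro m
    induction m with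
    | zero =>
      intro y hy hyk
      have := hu y (by simpa using hy) hyk
      simpa [hS] using this
    | succ m ih =>
      intro y hy hyk
      set r := r0 * (1 / 2) ^ m with hr
      have hrp : 0 < r := by positivity
      have hrr : r ≤ r0 := by
        have : (1 / 2 : ℝ) ^ m ≤ 1 := pow_le_one₀ (by norm_num) (by norm_num)
        rw [hr]; nlinarith
      have hrα : r ^ α = r0 ^ α * q ^ m := by
        rw [hr, Real.mul_rpow hr0.le (by positivity), hq, ← Real.rpow_natCast,
          ← Real.rpow_natCast, ← Real.rpow_mul (by norm_num), ← Real.rpow_mul (by norm_num),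
          mul_comm (m : ℝ)]
      have hqm : q ^ m ≤ 1 := pow_le_one₀ hq0.le hq1.le
      have hqm0 : 0 < q ^ m := by positivity
      have hre : r0 * (1 / 2) ^ (m + 1) = r / 2 := by rw [pow_succ, hr]; ring
      rw [hre] at hy ⊢
      have hr0α : r0 ^ α ≤ 1 := Real.rpow_le_one hr0.le (by linarith) hα.le
      have hr0α0 : 0 < r0 ^ α := by positivity
      have hrle : Kb * r ^ α ≤ Kb * r0 ^ α := by gcongr
      have ha0 : 0 ≤ A * (1 - 2 * (1 + B) * σ * S m) := by
        have := hS2 m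
        exact mul_nonneg hA (by linarith)
      have ha1 : A * (1 - 2 * (1 + B) * σ * S m) ≤ A := by
        have : 0 ≤ 2 * (1 + B) * σ * S m := by have := hS0 m; positivity
        nlinarith
      have key := hopf_step hlam hLam hB0 hB hKb hQ D hrp (by linarith) (by linarith)
        (hrle.trans h1) ha0 (by positivity : 0 ≤ σ * A * q ^ m) z0 hz0 hz01 ih y hy hyk
      have e1 : A * (1 - 2 * (1 + B) * σ * S m) - 2 * (1 + B) * (σ * A * q ^ m) =
        A * (1 - 2 * (1 + B) * σ * S (m + 1)) := by
        simp only [hS, Finset.sum_range_succ]; ring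
      rw [e1] at key
      have e2 : 2 / κ0 * (F * r ^ α + (A * (1 - 2 * (1 + B) * σ * S m) +
          2 * (2 + B) * (σ * A * q ^ m)) * (Kb * r ^ α)) ≤ σ * A * q ^ (m + 1) := by
        have g1 : A * (1 - 2 * (1 + B) * σ * S m) + 2 * (2 + B) * (σ * A * q ^ m) ≤
            A * (1 + 2 * (2 + B) * σ) := by
          have : 2 * (2 + B) * (σ * A * q ^ m) ≤ 2 * (2 + B) * (σ * A * 1) := by gcongr
          linarith
        calc 2 / κ0 * (F * r ^ α + (A * (1 - 2 * (1 + B) * σ * S m) +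
              2 * (2 + B) * (σ * A * q ^ m)) * (Kb * r ^ α))
            ≤ 2 / κ0 * (F * r ^ α + (A * (1 + 2 * (2 + B) * σ)) * (Kb * r ^ α)) := by gcongr
          _ = q ^ m * ((4 / κ0 * F) / 2 * r0 ^ α +
              A / 2 * ((4 / κ0) * (1 + 2 * (2 + B) * σ) * (Kb * r0 ^ α))) := by rw [hrα]; ring
          _ ≤ q ^ m * ((σ * A / 2) / 2 * 1 + A / 2 * (σ / 2)) := by gcongr
          _ = σ * A * q ^ m * (1 / 2) := by ring
          _ ≤ σ * A * q ^ m * q := by gcongr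
          _ = _ := by rw [pow_succ]; ring
      have e3 := mul_le_mul_of_nonneg_right e2 (by positivity : 0 ≤ r / 2)
      linarith
  intro y hy hyk
  have h4 := main m y hy hyk
  have h5 : A / 2 * y k ≤ A * (1 - 2 * (1 + B) * σ * S m) * y k := by
    have := hS2 m
    have : A * (1 / 2) ≤ A * (1 - 2 * (1 + B) * σ * S m) := by gcongr; linarith
    gcongr
    linarith
  have h6 : σ * A * q ^ m * (r0 * (1 / 2) ^ m) ≤ σ * A * 1 * (r0 * (1 / 2) ^ m) := by
    gcongr
    exact pow_le_one₀ hq0.le hq1.le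
  linarith

set_option maxHeartbeats 1000000 in
lemma hopf {n : ℕ} (k : Fin n) (lam Lam α Kb d0 : ℝ) (hlam : 0 < lam) (hLam : lam ≤ Lam)
    (hα : 0 < α) (hα1 : α ≤ 1) (hKb : 0 ≤ Kb) (hd0 : 0 < d0) (hd4 : d0 ≤ 1 / 4) :
    ∃ h1 c C : ℝ, 0 < h1 ∧ h1 ≤ 1 / 8 ∧ 0 < c ∧ 0 < C ∧
      ∀ (F : ℝ) (b f u : EuclideanSpace ℝ (Fin n) → ℝ), Dat k lam Lam α Kb d0 F b f u →
      ∀ T : ℝ, 0 ≤ T →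
      (∀ y : EuclideanSpace ℝ (Fin n), ‖y‖ < 7 / 4 → h1 ≤ y k → T ≤ u y) →
      ∀ x ∈ HB k 1, (c * T - C * F) * x k ≤ u x := by
  obtain ⟨κ0, hκ0, hQ⟩ := quad_barrier k lam Lam hlam
  have hn : 1 ≤ n := by have := k.2; omega
  have hn1 : (1 : ℝ) ≤ n := by exact_mod_cast hn
  have hLam0 : 0 < Lam := hlam.trans_le hLam
  set B := Lam * n / lam with hB
  have hB0 : 0 < B := by positivity
  have hBl : Lam * n ≤ B * lam := by rw [hB]; field_simp; exact le_rfl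
  set q : ℝ := (1 / 2 : ℝ) ^ α with hq
  have hq1 : q < 1 := Real.rpow_lt_one (by norm_num) (by norm_num) hα
  have hq1' : 0 < 1 - q := by linarith
  set σ := min (1 / 8) ((1 - q) / (4 * (1 + B))) with hσ
  have hσ0 : 0 < σ := by positivity
  have hσ8 : σ ≤ 1 / 8 := min_le_left _ _
  have hσq : 4 * (1 + B) * σ ≤ 1 - q := by
    have : σ ≤ (1 - q) / (4 * (1 + B)) := min_le_right _ _
    rw [le_div_iff₀ (by positivity)] at this
    linarith
  set κ := lam / (2 * (Lam * n)) with hκ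
  have hκ1 : 0 < κ := by positivity
  have hκe : κ * (2 * (Lam * n)) = lam := by rw [hκ]; field_simp
  have hκ2 : κ ≤ 1 / 2 := by
    rw [hκ, div_le_iff₀ (by positivity)]
    nlinarith
  obtain ⟨s, hs, hsm⟩ := exists_small (δ := min κ0 (min (σ * κ * κ0 / 32)
    (σ * κ0 / (8 * (1 + 2 * (2 + B) * σ))))) hα hKb (by positivity)
  set ρ := min d0 s with hρ
  have hρ0 : 0 < ρ := by positivity
  have hρd : ρ ≤ d0 := min_le_left _ _
  set H := κ * ρ with hH
  have hH0 : 0 < H := by positivity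
  have hHρ : H ≤ ρ / 2 := by rw [hH]; nlinarith
  have hsρ := hsm ρ hρ0.le (min_le_right _ _)
  have hsH := hsm H hH0.le (by have : ρ ≤ s := min_le_right _ _; linarith)
  have b1 : Kb * ρ ^ α ≤ κ0 := hsρ.trans (min_le_left _ _)
  have b2 : Kb * ρ ^ α ≤ σ * κ * κ0 / 32 := hsρ.trans ((min_le_right _ _).trans (min_le_left _ _))
  have b3 : Kb * H ^ α ≤ κ0 := hsH.trans (min_le_left _ _)
  have b4 : Kb * H ^ α ≤ σ * κ0 / (8 * (1 + 2 * (2 + B) * σ)) :=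
    hsH.trans ((min_le_right _ _).trans (min_le_right _ _))
  set τ := σ * κ * κ0 / 8 with hτ
  have hτ0 : 0 < τ := by positivity
  set c := min (1 / (8 * H)) 1 with hc
  have hc0 : 0 < c := by positivity
  refine ⟨H / 2, c, 2 * H * c / τ, by positivity, by linarith, hc0, by positivity, ?_⟩
  intro F b f u D T hT hu x hx
  have hF := D.F0
  have hux : 0 ≤ u x := D.ss.u0 x ⟨hx.1.trans (by norm_num), hx.2⟩
  have hxk := hx.2
  have hx1 : x k ≤ 1 := by
    have := norm_sub_k k x 0 (by simp)
    simp only [sub_zero] at this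
    linarith [hx.1]
  set A := T / (2 * H) with hA
  have hA0 : 0 ≤ A := by positivity
  have hTA : T = 2 * H * A := by rw [hA]; field_simp
  by_cases hFA : τ * A < F
  · have : c * T - 2 * H * c / τ * F ≤ 0 := by
      have e : c * T = 2 * H * c / τ * (τ * A) := by rw [hTA]; field_simp
      rw [e]
      have : 2 * H * c / τ * (τ * A) ≤ 2 * H * c / τ * F := by gcongr
      linarith
    exact (mul_nonpos_of_nonpos_of_nonneg this hxk.le).trans hux
  push Not at hFA
  have hle : (c * T - 2 * H * c / τ * F) * x k ≤ c * T * x k := by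
    have : 0 ≤ 2 * H * c / τ * F := by positivity
    gcongr
    linarith
  refine hle.trans ?_
  by_cases hxH : H ≤ x k
  · have h1 := hu x (by linarith [hx.1]) (by linarith)
    have h2 : c * T * x k ≤ 1 * T * 1 := by
      gcongr
      exact min_le_right _ _
    linarith
  push Not at hxH
  have hfin : A / 4 * x k ≤ u x → c * T * x k ≤ u x := by
    intro h
    refine le_trans ?_ h
    have : c * T ≤ 1 / (8 * H) * T := by gcongr; exact min_le_left _ _
    have e : 1 / (8 * H) * T = A / 4 := by rw [hA]; field_simp; ring
    rw [e] at this
    gcongr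
  apply hfin
  set z0 := flat k x with hz0
  have hz0k : z0 k = 0 := flat_k k x
  have hz01 : ‖z0‖ ≤ 1 := by
    have := flat_le k x 0 (by simp)
    simp only [sub_zero] at this
    linarith [hx.1]
  have hinit : ∀ y : EuclideanSpace ℝ (Fin n), ‖y - z0‖ < H → 0 < y k →
      A * y k - σ * A * H ≤ u y := by
    intro y hy hyk
    have hyH : y k < H := (norm_sub_k k y z0 hz0k).trans_lt hy
    have hfl : ‖flat k y‖ ≤ 5 / 4 := by
      have g1 := flat_le k y z0 hz0k
      have h5 : ‖flat k y‖ ≤ ‖flat k y - z0‖ + ‖z0‖ := by simpa using norm_add_le (flat k y - z0) z0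
      linarith
    have := hopf_init hlam hLam hKb hQ D hH0 hρ0 (by linarith) (by linarith) ?_ ?_ b1 hT hu y hfl
      hyk hyH
    · have e : 2 * ρ * (F * ρ ^ α + (4 * T / H) * (Kb * ρ ^ α)) / κ0 ≤ σ * A * H := by
        have e1 : 4 * T / H = 8 * A := by rw [hTA]; field_simp; ring
        have hρα : ρ ^ α ≤ 1 := Real.rpow_le_one hρ0.le (by linarith) hα.le
        calc 2 * ρ * (F * ρ ^ α + (4 * T / H) * (Kb * ρ ^ α)) / κ0
            ≤ 2 * ρ * ((τ * A) * 1 + 8 * A * (σ * κ * κ0 / 32)) / κ0 := by rw [e1]; gcongr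
          _ = 3 / 4 * (σ * A * H) := by rw [hτ, hH]; field_simp; ring
          _ ≤ σ * A * H := by
            have : 0 ≤ σ * A * H := by positivity
            linarith
      linarith
    · rw [hH]
      have : (κ * ρ) ^ 2 * (2 * (Lam * n)) = κ * ρ ^ 2 * (κ * (2 * (Lam * n))) := by ring
      rw [this, hκe]
      have h0 : 0 ≤ lam * ρ ^ 2 := by positivity
      have h1 : κ * (lam * ρ ^ 2) ≤ 1 * (lam * ρ ^ 2) :=
        mul_le_mul_of_nonneg_right (by linarith) h0
      linarith
    · rw [hH, mul_pow]
      have h0 : 0 ≤ ρ ^ 2 := by positivity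
      have h2 : 2 * κ ^ 2 ≤ 1 := by nlinarith only [hκ1, hκ2]
      have h1 := mul_le_mul_of_nonneg_right h2 h0
      linarith
  have hit := hopf_iter hlam hLam hα hα1 hκ0 hB0.le hBl hKb hQ D hH0 (by linarith) (by linarith) hA0
    hσ0 hσ8 hq hσq b3 ?_ ?_ z0 hz0k (by linarith) hinit
  · obtain ⟨m, hm1, hm2⟩ := exists_nat_pow_near_of_lt_one (x := x k / H) (y := 1 / 2)
      (by positivity) (by rw [div_le_one hH0]; exact hxH.le) (by norm_num) (by norm_num)
    rw [lt_div_iff₀ hH0] at hm1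
    rw [div_le_iff₀ hH0] at hm2
    rcases hm2.lt_or_eq with hm2 | hm2
    · have := hit m x (by rw [hz0, flat_dist k x hxk.le]; linarith) hxk
      have g : σ * A * (H * (1 / 2) ^ m) ≤ 1 / 8 * A * (2 * x k) := by
        have : H * (1 / 2) ^ m ≤ 2 * x k := by rw [pow_succ] at hm1; linarith
        gcongr
      linarith
    · rcases m with _ | m
      · simp at hm2; linarith
      · have hm3 : x k < H * (1 / 2) ^ m := by
          rw [hm2, pow_succ]
          have : 0 < (1 / 2 : ℝ) ^ m * H := by positivity
          linarith
        have := hit m x (by rw [hz0, flat_dist k x hxk.le]; linarith) hxk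
        have g : σ * A * (H * (1 / 2) ^ m) ≤ 1 / 8 * A * (2 * x k) := by
          have : H * (1 / 2) ^ m ≤ 2 * x k := by rw [hm2, pow_succ]; linarith
          gcongr
        linarith
  · calc 4 / κ0 * (1 + 2 * (2 + B) * σ) * (Kb * H ^ α)
        ≤ 4 / κ0 * (1 + 2 * (2 + B) * σ) * (σ * κ0 / (8 * (1 + 2 * (2 + B) * σ))) := by gcongr
      _ = σ / 2 := by field_simp; norm_num
      _ ≤ σ / 2 := le_rfl
  · calc 4 / κ0 * F ≤ 4 / κ0 * (τ * A) := by gcongr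
      _ = σ * A / 2 * κ := by rw [hτ]; field_simp; ring
      _ ≤ σ * A / 2 * 1 := by gcongr; linarith
      _ = _ := by ring

end part14

section part15

open MeasureTheory Filter Topology Set
open scoped ENNReal

lemma isOpen_HB {n : ℕ} (k : Fin n) (R : ℝ) : IsOpen (HB k R) := by
  have hkc : Continuous (fun y : EuclideanSpace ℝ (Fin n) => y k) :=
    (EuclideanSpace.proj k : EuclideanSpace ℝ (Fin n) →L[ℝ] ℝ).continuous
  exact (isOpen_lt continuous_norm continuous_const).inter (isOpen_lt continuous_const hkc)

lemma int_finite {n : ℕ} (k : Fin n) {s : ℝ} (hs : s < 1) :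
    ∫⁻ y in HB k 2, ENNReal.ofReal ((y k) ^ (-s)) < ⊤ := by
  classical
  set g : Fin n → ℝ → ℝ := fun i => if i = k then (Ioc (0 : ℝ) 2).indicator (fun v => v ^ (-s))
    else (Ioc (-2 : ℝ) 2).indicator (fun _ => 1) with hg
  have hgi : ∀ i, Integrable (g i) volume := by
    intro i
    simp only [hg]
    split_ifs
    · rw [integrable_indicator_iff measurableSet_Ioc]
      rw [← intervalIntegrable_iff_integrableOn_Ioc_of_le (by norm_num)]
      exact intervalIntegral.intervalIntegrable_rpow' (by linarith)
    · rw [integrable_indicator_iff measurableSet_Ioc]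
      exact integrableOn_const (by simp)
  have h1 : Integrable (fun x : Fin n → ℝ => ∏ i, g i (x i)) volume :=
    Integrable.fintype_prod (f := g) hgi
  have h2 := ((PiLp.volume_preserving_ofLp (Fin n)).integrable_comp_of_integrable h1)
  refine lt_of_le_of_lt ?_ h2.lintegral_lt_top
  refine le_trans ?_ (setLIntegral_le_lintegral (HB k 2) _)
  have hHB : MeasurableSet (HB k 2) := (isOpen_HB k 2).measurableSet
  apply setLIntegral_mono' hHB
  intro y hy
  apply ENNReal.ofReal_le_ofReal
  have hyi : ∀ i, |y i| < 2 := fun i => (PiLp.norm_apply_le y i).trans_lt hy.1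
  have e : ∀ i, g i (y i) = if i = k then (y k) ^ (-s) else 1 := by
    intro i
    have := abs_lt.1 (hyi i)
    simp only [hg]
    split_ifs with h
    · subst h
      rw [indicator_of_mem]
      exact ⟨hy.2, this.2.le⟩
    · rw [indicator_of_mem]
      exact ⟨this.1, this.2.le⟩
  simp only [Function.comp]
  rw [Finset.prod_congr rfl (fun i _ => e i)]
  simp

lemma low_point {n : ℕ} (k : Fin n) (lam Lam α Kb d0 : ℝ) (hlam : 0 < lam) (hLam : lam ≤ Lam)
    (hα : 0 < α) (hα1 : α ≤ 1) (hKb : 0 ≤ Kb) (hd0 : 0 < d0) (hd4 : d0 ≤ 1 / 4)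
    (δ' : ℝ) (hδ' : 0 < δ') :
    ∃ (κ C : ℝ) (m : ℕ), 0 < κ ∧ κ ≤ 1 / 512 ∧ Kb * (128 * κ) ^ α ≤ δ' ∧ 0 < C ∧
      ∀ (F : ℝ) (b f u : EuclideanSpace ℝ (Fin n) → ℝ), Dat k lam Lam α Kb d0 F b f u →
      ∀ J : ℝ, 0 < J → F ≤ J → (∃ y ∈ HB k 1, u y < J * y k) →
      ∀ x ∈ HB k (3 / 2), ∀ t, C * J ≤ t * (x k) ^ m →
        ∃ w ∈ Metric.ball x (κ * x k), u w < t := by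
  obtain ⟨κ, C1, m, hκ, hκ1, hκδ, hC1, hch⟩ := chain k lam Lam α Kb hlam hLam hα hKb δ' hδ'
  obtain ⟨h1, c2, C2, hh1, hh18, hc2, hC2, hhopf⟩ :=
    hopf k lam Lam α Kb d0 hlam hLam hα hα1 hKb hd0 hd4
  obtain ⟨c, hc, hch⟩ := hch h1 hh1 hh18
  refine ⟨κ, (1 + C2 + c2 * C1) / (c * c2), m, hκ, hκ1, hκδ, by positivity, ?_⟩
  intro F b f u D J hJ hFJ ⟨y, hy, hyu⟩ x hx t ht
  have hF := D.F0
  have hxk := hx.2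
  by_contra hcon
  push Not at hcon
  have ht0 : 0 < t := by
    by_contra h
    push Not at h
    have h2 : 0 < (1 + C2 + c2 * C1) / (c * c2) * J := by positivity
    have : t * x k ^ m ≤ 0 := mul_nonpos_of_nonpos_of_nonneg h (by positivity)
    linarith
  have h2 := hch d0 F b f u D x t hx.1 hxk ht0.le hcon
  have h3 : (1 + C2 + c2 * C1) * J ≤ c2 * (c * x k ^ m * t) := by
    rw [div_mul_eq_mul_div, div_le_iff₀ (by positivity)] at ht
    linarith
  have h4 : c2 * C1 * F ≤ c2 * C1 * J := by gcongr
  have h5 : C2 * F ≤ C2 * J := by gcongr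
  have h6 : 0 < c2 * (c * x k ^ m * t - C1 * F) := by
    have : 0 < C2 * J := by positivity
    linarith
  have h7 : 0 ≤ c * x k ^ m * t - C1 * F := (pos_of_mul_pos_right h6 hc2.le).le
  have h8 := hhopf F b f u D _ h7 h2 y hy
  have h9 := lt_of_mul_lt_mul_right (h8.trans_lt hyu) hy.2.le
  linarith

lemma local_int {n : ℕ} (k : Fin n) (lam Lam α Kb d0 : ℝ) (hlam : 0 < lam) (hLam : lam ≤ Lam)
    (hα : 0 < α) (hα1 : α ≤ 1) (hKb : 0 ≤ Kb) (hd0 : 0 < d0) (hd4 : d0 ≤ 1 / 4) :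
    ∃ (κ C ε s : ℝ), 0 < κ ∧ κ ≤ 1 / 512 ∧ 0 < C ∧ 0 < ε ∧ s < 1 ∧
      ∀ (F : ℝ) (b f u : EuclideanSpace ℝ (Fin n) → ℝ), Dat k lam Lam α Kb d0 F b f u →
      ∀ J : ℝ, 0 < J → F ≤ J → (∃ y ∈ HB k 1, u y < J * y k) →
      ∀ x ∈ HB k (3 / 2),
        ∫⁻ y in Metric.closedBall x (4 * (κ * x k)), ENNReal.ofReal ((u y / y k) ^ ε) ≤
          ENNReal.ofReal (C * J ^ ε) *
            ∫⁻ y in Metric.closedBall x (κ * x k), ENNReal.ofReal ((y k) ^ (-s)) := by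
  have hn : 1 ≤ n := by have := k.2; omega
  obtain ⟨ε0, δ, Cw, hε0, hδ, hCw, hw⟩ := weakLe n hn lam Lam hlam hLam
  obtain ⟨κ, C3, m, hκ, hκ1, hκδ, hC3, hlow⟩ :=
    low_point k lam Lam α Kb d0 hlam hLam hα hα1 hKb hd0 hd4 δ hδ
  set ε := min ε0 (1 / (2 * (m + 1))) with hε
  have hεp : 0 < ε := by positivity
  have hεm : (m + 1) * ε ≤ 1 / 2 := by
    have : ε ≤ 1 / (2 * (m + 1)) := min_le_right _ _
    rw [le_div_iff₀ (by positivity)] at this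
    linarith
  set C4 := max C3 (8 * κ * 2 ^ (m + 1) / δ) with hC4
  have hC40 : 0 < C4 := lt_max_of_lt_left hC3
  have hC41 : 8 * κ * 2 ^ (m + 1) ≤ δ * C4 := by
    have : 8 * κ * 2 ^ (m + 1) / δ ≤ C4 := le_max_right _ _
    rw [div_le_iff₀ hδ] at this
    linarith
  refine ⟨κ, Cw * 8 ^ n * (2 * C4) ^ ε * 2, ε, (m + 1) * ε, hκ, hκ1, by positivity, hεp,
    by linarith, ?_⟩
  intro F b f u D J hJ hFJ hy x hx
  have hF := D.F0
  set h := x k with hh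
  have hh0 : 0 < h := hx.2
  have hh2 : h < 3 / 2 := by
    have := norm_sub_k k x 0 (by simp)
    simp only [sub_zero] at this
    exact this.trans_lt hx.1
  have hκh : κ * h ≤ h / 512 := by nlinarith
  have hκh0 : 0 < κ * h := by positivity
  set t := C4 * J / h ^ m with ht
  have ht0 : 0 < t := by positivity
  have hth : t * h ^ m = C4 * J := by rw [ht]; field_simp
  obtain ⟨w, hwb, hwt⟩ := hlow F b f u D J hJ hFJ hy x hx t (by
    rw [← hh, hth]; gcongr; exact le_max_left _ _)
  have hsub : Metric.ball x (9 * (8 * (κ * h))) ⊆ HB k 2 := by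
    apply ball_sub_HB
    · have := hx.1; linarith
    · rw [← hh]; linarith
  have hwk := hw b f u x (8 * (κ * h)) t (by positivity) ht0 (D.ss.mono Metric.isOpen_ball hsub)
    ((D.hb _ x _ hsub (by positivity) subset_rfl).mono ?_) ((D.hf _ hsub).mono ?_) w
    (Metric.ball_subset_ball (by linarith) hwb) hwt.le ε hεp (min_le_left _ _)
  · have hyk : ∀ y ∈ Metric.ball x (8 * (κ * h)), h / 2 ≤ y k ∧ y k ≤ 2 * h := by
      intro y hy
      have h1 := abs_le.1 (coord_le k y x)
      have h2 : dist y x < 8 * (κ * h) := hy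
      constructor <;> linarith [h1.1, h1.2]
    have hcb : Metric.closedBall x (4 * (κ * h)) ⊆ Metric.ball x (8 * (κ * h)) :=
      Metric.closedBall_subset_ball (by linarith)
    have hcb2 : Metric.closedBall x (κ * h) ⊆ Metric.ball x (8 * (κ * h)) :=
      Metric.closedBall_subset_ball (by linarith)
    have hsub8 : Metric.ball x (8 * (κ * h)) ⊆ HB k 2 :=
      (Metric.ball_subset_ball (by linarith)).trans hsub
    set s : ℝ := (m + 1) * ε with hs
    have hs0 : 0 < s := by positivity
    -- first integral
    have I1 : ∫⁻ y in Metric.closedBall x (4 * (κ * h)), ENNReal.ofReal ((u y / y k) ^ ε) ≤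
        ENNReal.ofReal ((2 / h) ^ ε) *
          ∫⁻ y in Metric.ball x (8 * (κ * h)), ENNReal.ofReal (u y ^ ε) := by
      refine (lintegral_mono_set hcb).trans ?_
      rw [← lintegral_const_mul' _ _ ENNReal.ofReal_ne_top]
      apply setLIntegral_mono' Metric.isOpen_ball.measurableSet
      intro y hy
      rw [← ENNReal.ofReal_mul (by positivity)]
      apply ENNReal.ofReal_le_ofReal
      have hu0 := D.ss.u0 y (hsub8 hy)
      have hyk1 := (hyk y hy).1
      have hyk0 : 0 < y k := by linarith
      rw [← Real.mul_rpow (by positivity) hu0]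
      apply Real.rpow_le_rpow (by positivity) _ hεp.le
      rw [div_le_iff₀ hyk0]
      have : 1 ≤ 2 / h * y k := by
        rw [div_mul_eq_mul_div, le_div_iff₀ hh0]; linarith
      calc u y = 1 * u y := (one_mul _).symm
        _ ≤ (2 / h * y k) * u y := by gcongr
        _ = _ := by ring
    -- second integral
    have I2 : ENNReal.ofReal (h ^ (-s)) * volume (Metric.closedBall x (κ * h)) ≤
        ENNReal.ofReal 2 * ∫⁻ y in Metric.closedBall x (κ * h), ENNReal.ofReal ((y k) ^ (-s)) := by
      rw [← lintegral_const_mul' _ _ ENNReal.ofReal_ne_top, ← setLIntegral_const]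
      apply setLIntegral_mono' Metric.isClosed_closedBall.measurableSet
      intro y hy
      rw [← ENNReal.ofReal_mul (by positivity)]
      apply ENNReal.ofReal_le_ofReal
      have hyk1 := hyk y (hcb2 hy)
      have hyk0 : 0 < y k := by linarith [hyk1.1]
      have h2s : (1 / 2 : ℝ) ≤ (2 : ℝ) ^ (-s) := by
        calc (1 / 2 : ℝ) = (2 : ℝ) ^ (-1 : ℝ) := by rw [Real.rpow_neg_one]; norm_num
          _ ≤ _ := Real.rpow_le_rpow_of_exponent_le (by norm_num) (by linarith)
      calc h ^ (-s) = 2 * ((1 / 2) * h ^ (-s)) := by ring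
        _ ≤ 2 * ((2 : ℝ) ^ (-s) * h ^ (-s)) := by gcongr
        _ = 2 * ((2 * h) ^ (-s)) := by rw [Real.mul_rpow (by norm_num) hh0.le]
        _ ≤ 2 * (y k) ^ (-s) := by
          gcongr 2 * ?_
          exact Real.rpow_le_rpow_of_nonpos hyk0 hyk1.2 (by linarith)
    have hvol : volume (Metric.ball x (8 * (κ * h))) =
        ENNReal.ofReal (8 ^ n) * volume (Metric.closedBall x (κ * h)) := by
      rw [vol_closedBall hn _ hκh0.le, vol_ball hn _ (by positivity),
        ← ENNReal.ofReal_mul (by positivity)]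
      congr 1
      rw [mul_pow]; ring
    have hpow : (2 / h) ^ ε * t ^ ε = (2 * C4) ^ ε * J ^ ε * h ^ (-s) := by
      have e1 : 2 / h * t = 2 * C4 * J * (h ^ (m + 1))⁻¹ := by rw [ht, pow_succ]; field_simp
      have e2 : ((h ^ (m + 1))⁻¹) ^ ε = h ^ (-s) := by
        rw [Real.rpow_neg hh0.le, Real.inv_rpow (by positivity), ← Real.rpow_natCast,
          ← Real.rpow_mul hh0.le, hs]
        push_cast; rfl
      rw [← Real.mul_rpow (by positivity) ht0.le, e1, Real.mul_rpow (by positivity) (by positivity),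
        Real.mul_rpow (by positivity) hJ.le, e2]
    calc _ ≤ ENNReal.ofReal ((2 / h) ^ ε) *
          ∫⁻ y in Metric.ball x (8 * (κ * h)), ENNReal.ofReal (u y ^ ε) := I1
      _ ≤ ENNReal.ofReal ((2 / h) ^ ε) * (ENNReal.ofReal (Cw * t ^ ε) *
          (ENNReal.ofReal (8 ^ n) * volume (Metric.closedBall x (κ * h)))) := by
          rw [← hvol]; gcongr
      _ = ENNReal.ofReal (Cw * 8 ^ n * (2 * C4) ^ ε * J ^ ε) *
          (ENNReal.ofReal (h ^ (-s)) * volume (Metric.closedBall x (κ * h))) := by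
          simp only [← mul_assoc]
          rw [← ENNReal.ofReal_mul (by positivity), ← ENNReal.ofReal_mul (by positivity),
            ← ENNReal.ofReal_mul (by positivity)]
          congr 2
          linear_combination Cw * 8 ^ n * hpow
      _ ≤ ENNReal.ofReal (Cw * 8 ^ n * (2 * C4) ^ ε * J ^ ε) * (ENNReal.ofReal 2 *
          ∫⁻ y in Metric.closedBall x (κ * h), ENNReal.ofReal ((y k) ^ (-s))) := by gcongr
      _ = _ := by
          rw [← mul_assoc, ← ENNReal.ofReal_mul (by positivity)]
          congr 2
          ring
  · refine le_trans ?_ hκδ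
    have : 9 * (8 * (κ * h)) ≤ 128 * κ := by nlinarith
    gcongr
  · refine hFJ.trans ?_
    rw [le_div_iff₀ (by positivity)]
    have h1 : h ^ (m + 1) ≤ 2 ^ (m + 1) := pow_le_pow_left₀ hh0.le (by linarith) _
    have h2 : J * (8 * (κ * h)) * h ^ m ≤ δ * t * h ^ m := by
      calc J * (8 * (κ * h)) * h ^ m = J * (8 * κ * h ^ (m + 1)) := by rw [pow_succ]; ring
        _ ≤ J * (8 * κ * 2 ^ (m + 1)) := by gcongr
        _ ≤ J * (δ * C4) := by gcongr
        _ = δ * t * h ^ m := by rw [mul_assoc δ, hth]; ring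
    exact le_of_mul_le_mul_right h2 (by positivity)

lemma global_int {n : ℕ} (k : Fin n) (lam Lam α Kb d0 : ℝ) (hlam : 0 < lam) (hLam : lam ≤ Lam)
    (hα : 0 < α) (hα1 : α ≤ 1) (hKb : 0 ≤ Kb) (hd0 : 0 < d0) (hd4 : d0 ≤ 1 / 4) :
    ∃ (C ε : ℝ), 0 < C ∧ 0 < ε ∧
      ∀ (F : ℝ) (b f u : EuclideanSpace ℝ (Fin n) → ℝ), Dat k lam Lam α Kb d0 F b f u →
      ∀ J : ℝ, 0 < J → F ≤ J → (∃ y ∈ HB k 1, u y < J * y k) →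
        (∫⁻ y in HB k (3 / 2), ENNReal.ofReal ((u y / y k) ^ ε)) ^ (1 / ε) ≤
          ENNReal.ofReal (C * J) := by
  obtain ⟨κ, C, ε, s, hκ, hκ1, hC, hε, hs, hloc⟩ :=
    local_int k lam Lam α Kb d0 hlam hLam hα hα1 hKb hd0 hd4
  have hfin := int_finite k hs
  set I := ∫⁻ y in HB k 2, ENNReal.ofReal ((y k) ^ (-s)) with hI
  refine ⟨(C * (I.toReal + 1)) ^ (1 / ε), ε, by positivity, hε, ?_⟩
  intro F b f u D J hJ hFJ hy
  have hloc := hloc F b f u D J hJ hFJ hy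
  have hn2 : ∀ x ∈ HB k (3 / 2), x k < 3 / 2 := by
    intro x hx
    have := norm_sub_k k x 0 (by simp)
    simp only [sub_zero] at this
    exact this.trans_lt hx.1
  obtain ⟨U, hUA, hUc, hdisj, hcov⟩ := vitali_cover (HB k (3 / 2)) (fun x => x)
    (fun x => κ * x k) 1 (fun x hx => mul_pos hκ hx.2)
    (fun x hx => by have := hn2 x hx; have := hx.2; nlinarith)
    (fun x hx => Metric.mem_closedBall_self (mul_pos hκ hx.2).le)
  have : Countable U := hUc.to_subtype
  have h1 : ∫⁻ y in HB k (3 / 2), ENNReal.ofReal ((u y / y k) ^ ε) ≤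
      ENNReal.ofReal (C * J ^ ε) * I := by
    calc _ ≤ ∫⁻ y in ⋃ x : U, Metric.closedBall x.1 (4 * (κ * x.1 k)),
          ENNReal.ofReal ((u y / y k) ^ ε) := by
          apply lintegral_mono_set
          rwa [biUnion_eq_iUnion] at hcov
      _ ≤ ∑' x : U, ∫⁻ y in Metric.closedBall x.1 (4 * (κ * x.1 k)),
          ENNReal.ofReal ((u y / y k) ^ ε) := lintegral_iUnion_le _ _
      _ ≤ ∑' x : U, ENNReal.ofReal (C * J ^ ε) *
            ∫⁻ y in Metric.closedBall x.1 (κ * x.1 k), ENNReal.ofReal ((y k) ^ (-s)) :=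
          ENNReal.tsum_le_tsum fun x => hloc x.1 (hUA x.2)
      _ = ENNReal.ofReal (C * J ^ ε) *
            ∫⁻ y in ⋃ x : U, Metric.closedBall x.1 (κ * x.1 k), ENNReal.ofReal ((y k) ^ (-s)) := by
          rw [ENNReal.tsum_mul_left, lintegral_iUnion]
          · exact fun x => Metric.isClosed_closedBall.measurableSet
          · intro a b hab
            exact hdisj a.2 b.2 (fun h => hab (Subtype.ext h))
      _ ≤ _ := by
          refine mul_le_mul_right (lintegral_mono_set ?_) _
          apply iUnion_subset
          intro x
          have hx := hUA x.2
          have hxk := hx.2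
          have hx1 := hx.1
          have := hn2 x.1 hx
          have hlt : κ * x.1 k ≤ x.1 k / 512 := by nlinarith
          refine (Metric.closedBall_subset_ball (ε₂ := x.1 k / 256) (by linarith)).trans ?_
          exact ball_sub_HB (by linarith) (by linarith)
  have hIr : I ≤ ENNReal.ofReal (I.toReal + 1) := by
    rw [← ENNReal.ofReal_toReal hfin.ne]
    apply ENNReal.ofReal_le_ofReal
    rw [ENNReal.toReal_ofReal ENNReal.toReal_nonneg]
    linarith
  calc _ ≤ (ENNReal.ofReal (C * J ^ ε) * ENNReal.ofReal (I.toReal + 1)) ^ (1 / ε) := by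
        apply ENNReal.rpow_le_rpow _ (by positivity)
        exact h1.trans (by gcongr)
    _ = ENNReal.ofReal ((C * (I.toReal + 1)) ^ (1 / ε) * J) := by
        rw [← ENNReal.ofReal_mul (by positivity), ENNReal.ofReal_rpow_of_nonneg (by positivity)
          (by positivity)]
        congr 1
        rw [show C * J ^ ε * (I.toReal + 1) = C * (I.toReal + 1) * J ^ ε by ring,
          Real.mul_rpow (by positivity) (by positivity), ← Real.rpow_mul hJ.le,
          mul_one_div_cancel hε.ne', Real.rpow_one]

end part15

section part16

open MeasureTheory Filter Topology Set
open scoped ENNReal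

lemma mk_dat {n : ℕ} (hn : 1 ≤ n) {lam Lam : ℝ} (hLam : lam ≤ Lam)
    {p q d0 K : ℝ} (hq : (n : ℝ) < q) (hp : (n : ℝ) ≤ p) (hK : 0 < K)
    (b f u : EuclideanSpace ℝ (Fin n) → ℝ)
    (hb : ContinuousOn b (halfBall n hn 2)) (hf : ContinuousOn f (halfBall n hn 2))
    (hb0 : ∀ x ∈ halfBall n hn 2, 0 ≤ b x)
    (hbK : LpNormE n q b (halfBall n hn 2) ≤ ENNReal.ofReal K)
    (hu : ContDiffOn ℝ 2 u (halfBall n hn 2)) (hu0 : ∀ x ∈ halfBall n hn 2, 0 ≤ u x)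
    (heq : ∀ x ∈ halfBall n hn 2,
          pucciMinus n lam Lam (hess n u x) - b x * gradNorm n u x ≤ f x)
    (hL : LpqNormHB n hn p q d0 2 (fun x => max (f x) 0) ≠ ⊤) :
    Dat (⟨n - 1, by omega⟩ : Fin n) lam Lam (1 - n / q) (K * omegaR n ^ (1 / (n : ℝ) - 1 / q)) d0
      ((omegaR n ^ (1 / (n : ℝ) - 1 / p) * 2 ^ (1 - n / p) + omegaR n ^ (1 / (n : ℝ) - 1 / q)) *
        (LpqNormHB n hn p q d0 2 (fun x => max (f x) 0)).toReal) b (fun x => max (f x) 0) u := by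
  have hω := omegaR_pos n
  set L := LpqNormHB n hn p q d0 2 (fun x => max (f x) 0) with hLdef
  have hL1 : LpNormE n p (fun x => max (f x) 0) (halfBall n hn 2) ≤ ENNReal.ofReal L.toReal := by
    rw [ENNReal.ofReal_toReal hL]; exact le_self_add
  have hL2 : LpNormE n q (fun x => max (f x) 0) {x ∈ halfBall n hn 2 | lastC n hn x < d0} ≤
      ENNReal.ofReal L.toReal := by
    rw [ENNReal.ofReal_toReal hL]; exact le_add_self
  have hfc : ContinuousOn (fun x => max (f x) 0) (halfBall n hn 2) := ContinuousOn.sup hf continuousOn_const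
  have hO : IsOpen (halfBall n hn 2) := isOpen_HB (⟨n - 1, by omega⟩ : Fin n) 2
  have meas : ∀ (g : EuclideanSpace ℝ (Fin n) → ℝ) (S : Set (EuclideanSpace ℝ (Fin n))),
      ContinuousOn g (halfBall n hn 2) → S ⊆ halfBall n hn 2 →
      AEMeasurable g (volume.restrict S) := fun g S hg hS =>
    (hg.aemeasurable hO.measurableSet).mono_measure (Measure.restrict_mono hS le_rfl)
  refine ⟨⟨hO, hb, hfc, hu, hb0, fun x _ => le_max_right _ _, hu0, ?_⟩, by positivity, ?_, ?_, ?_⟩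
  · intro x hx
    apply QQ_of_pucci hLam
    have := heq x hx
    have h2 := le_max_left (f x) 0
    simp only [gradNorm] at this
    linarith
  · intro S z r hS hr hSz
    have := holder_ball hn hq.le hS (meas b S hb hS) hK.le hr hbK hSz
    rwa [← mul_assoc] at this
  · intro S hS
    have := holder_ball hn hp hS (meas _ S hfc hS) ENNReal.toReal_nonneg (by norm_num : (0 : ℝ) ≤ 2)
      (z := 0) hL1 (fun x hx => by simpa using (hS hx).1)
    refine this.mono ?_
    rw [mul_comm]
    have h0 : 0 ≤ omegaR n ^ (1 / (n : ℝ) - 1 / q) := by positivity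
    gcongr
    linarith
  · intro S z r hS hSd hr hSz
    have := holder_ball hn hq.le (D := {x ∈ halfBall n hn 2 | lastC n hn x < d0})
      (fun x hx => ⟨hS hx, hSd x hx⟩) (meas _ S hfc hS) ENNReal.toReal_nonneg hr
      hL2 hSz
    refine this.mono ?_
    rw [← mul_assoc, mul_comm L.toReal]
    have h0 : 0 ≤ omegaR n ^ (1 / (n : ℝ) - 1 / p) * 2 ^ (1 - n / p) := by positivity
    gcongr
    linarith

theorem harnack_main
    (n : ℕ) (_hn : 2 ≤ n) (hn1 : 1 ≤ n) (lam Lam : ℝ) (hlam : 0 < lam) (hLam : lam ≤ Lam)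
    (p q d0 K : ℝ) (hq : (n : ℝ) < q) (hp : (n : ℝ) ≤ p) (hpq : p ≤ q)
    (hd0 : 0 < d0) (hd0' : d0 ≤ 1 / 4) (hK : 0 < K) :
    ∃ ε c C : ℝ, 0 < ε ∧ 0 < c ∧ 0 < C ∧
      ∀ b f u : EuclideanSpace ℝ (Fin n) → ℝ,
        ContinuousOn b (halfBall n hn1 2) →
        ContinuousOn f (halfBall n hn1 2) →
        (∀ x ∈ halfBall n hn1 2, 0 ≤ b x) →
        LpNormE n q b (halfBall n hn1 2) ≤ ENNReal.ofReal K →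
        ContDiffOn ℝ 2 u (halfBall n hn1 2) →
        (∀ x ∈ halfBall n hn1 2, 0 ≤ u x) →
        (∀ x ∈ halfBall n hn1 2,
          pucciMinus n lam Lam (hess n u x) - b x * gradNorm n u x ≤ f x) →
        ENNReal.ofReal c *
            (∫⁻ x in halfBall n hn1 (3 / 2),
              ENNReal.ofReal ((u x / lastC n hn1 x) ^ ε)) ^ (1 / ε)
          ≤ ENNReal.ofReal (⨅ x : halfBall n hn1 1, u x.1 / lastC n hn1 x.1)
            + ENNReal.ofReal C * LpqNormHB n hn1 p q d0 2 (fun x => max (f x) 0) := by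
  have hn0 : (0 : ℝ) < n := by exact_mod_cast hn1
  have hq0 : 0 < q := hn0.trans hq
  have hω := omegaR_pos n
  have hα : 0 < 1 - n / q := by
    rw [sub_pos, div_lt_one hq0]; exact hq
  have hα1 : 1 - n / q ≤ 1 := by
    have : 0 ≤ n / q := by positivity
    linarith
  set k : Fin n := ⟨n - 1, by omega⟩ with hk
  obtain ⟨C, ε, hC, hε, hmain⟩ := global_int k lam Lam (1 - n / q)
    (K * omegaR n ^ (1 / (n : ℝ) - 1 / q)) d0 hlam hLam hα hα1 (by positivity) hd0 hd0'
  set Kf := omegaR n ^ (1 / (n : ℝ) - 1 / p) * 2 ^ (1 - n / p) + omegaR n ^ (1 / (n : ℝ) - 1 / q)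
    with hKf
  have hKf0 : 0 < Kf := by positivity
  refine ⟨ε, 1 / C, Kf, hε, by positivity, hKf0, ?_⟩
  intro b f u hb hf hb0 hbK hu hu0 heq
  by_cases hL : LpqNormHB n hn1 p q d0 2 (fun x => max (f x) 0) = ⊤
  · rw [hL, ENNReal.mul_top (by simpa using hKf0), add_top]
    exact le_top
  have D := mk_dat hn1 hLam hq hp hK b f u hb hf hb0 hbK hu hu0 heq hL
  rw [← hKf] at D
  set L := LpqNormHB n hn1 p q d0 2 (fun x => max (f x) 0) with hLdef
  set I := ⨅ x : halfBall n hn1 1, u x.1 / lastC n hn1 x.1 with hI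
  have hF0 := D.F0
  have hsub1 : halfBall n hn1 1 ⊆ halfBall n hn1 2 := fun x hx =>
    ⟨hx.1.trans (by norm_num), hx.2⟩
  have hI0 : 0 ≤ I := Real.iInf_nonneg fun x =>
    div_nonneg (hu0 x.1 (hsub1 x.2)) x.2.2.le
  have hne : Nonempty (halfBall n hn1 1) := by
    refine ⟨⟨EuclideanSpace.single k (1 / 2 : ℝ), ?_, ?_⟩⟩
    · rw [EuclideanSpace.norm_single]; norm_num
    · simp [lastC, hk]
  have hη : ∀ η : ℝ, 0 < η → (∫⁻ x in halfBall n hn1 (3 / 2),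
              ENNReal.ofReal ((u x / lastC n hn1 x) ^ ε)) ^ (1 / ε) ≤
      ENNReal.ofReal (C * (I + Kf * L.toReal + η)) := by
    intro η hη
    obtain ⟨y, hy⟩ := exists_lt_of_ciInf_lt (show I < I + η by linarith)
    refine hmain _ b _ u D (I + Kf * L.toReal + η) (by linarith) (by linarith) ⟨y.1, y.2, ?_⟩
    have hyk : 0 < lastC n hn1 y.1 := y.2.2
    rw [div_lt_iff₀ hyk] at hy
    refine hy.trans_le ?_
    change _ ≤ _ * lastC n hn1 y.1
    gcongr
    linarith
  have hlim : (∫⁻ x in halfBall n hn1 (3 / 2),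
              ENNReal.ofReal ((u x / lastC n hn1 x) ^ ε)) ^ (1 / ε) ≤
      ENNReal.ofReal (C * (I + Kf * L.toReal)) := by
    have ht : Tendsto (fun η : ℝ => ENNReal.ofReal (C * (I + Kf * L.toReal + η))) (𝓝[>] 0)
        (𝓝 (ENNReal.ofReal (C * (I + Kf * L.toReal + 0)))) := by
      apply Tendsto.mono_left _ nhdsWithin_le_nhds
      apply Continuous.tendsto
      exact ENNReal.continuous_ofReal.comp (by fun_prop)
    rw [add_zero] at ht
    exact ge_of_tendsto ht (eventually_nhdsWithin_of_forall fun η h => hη η h)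
  calc _ ≤ ENNReal.ofReal (1 / C) * ENNReal.ofReal (C * (I + Kf * L.toReal)) := by gcongr
    _ = ENNReal.ofReal (I + Kf * L.toReal) := by
      rw [← ENNReal.ofReal_mul (by positivity)]
      congr 1
      field_simp
    _ = ENNReal.ofReal I + ENNReal.ofReal Kf * L := by
      rw [ENNReal.ofReal_add hI0 hF0, ENNReal.ofReal_mul hKf0.le, ENNReal.ofReal_toReal hL]

end part16

end harnackProof

/-- Boundary weak Harnack inequality in half-balls. -/
theorem boundary_weak_harnack_inequality
    (n : ℕ) (hn : 2 ≤ n) (lam Lam : ℝ) (hlam : 0 < lam) (hLam : lam ≤ Lam)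
    (p q d0 K : ℝ) (hq : (n : ℝ) < q) (hp : (n : ℝ) ≤ p) (hpq : p ≤ q)
    (hd0 : 0 < d0) (hd0' : d0 ≤ 1 / 4) (hK : 0 < K) :
    ∃ ε c C : ℝ, 0 < ε ∧ 0 < c ∧ 0 < C ∧
      ∀ b f u : EuclideanSpace ℝ (Fin n) → ℝ,
        ContinuousOn b (halfBall n (by omega) 2) →
        ContinuousOn f (halfBall n (by omega) 2) →
        (∀ x ∈ halfBall n (by omega) 2, 0 ≤ b x) →
        LpNormE n q b (halfBall n (by omega) 2) ≤ ENNReal.ofReal K →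
        ContDiffOn ℝ 2 u (halfBall n (by omega) 2) →
        (∀ x ∈ halfBall n (by omega) 2, 0 ≤ u x) →
        (∀ x ∈ halfBall n (by omega) 2,
          pucciMinus n lam Lam (hess n u x) - b x * gradNorm n u x ≤ f x) →
        ENNReal.ofReal c *
            (∫⁻ x in halfBall n (by omega) (3 / 2),
              ENNReal.ofReal ((u x / lastC n (by omega) x) ^ ε)) ^ (1 / ε)
          ≤ ENNReal.ofReal (⨅ x : halfBall n (by omega : 1 ≤ n) 1, u x.1 / lastC n (by omega) x.1)
            + ENNReal.ofReal C * LpqNormHB n (by omega) p q d0 2 (fun x => max (f x) 0) := by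
  exact harnack_main n hn (by omega) lam Lam hlam hLam p q d0 K hq hp hpq hd0 hd0' hK
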